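/- arXiv:1510.06321 — 2 statements merged into one kernel-verified Lean document; each statement's English description precedes it below -/
import Mathlib

section
/- Hörmander's L^p–L^q Fourier multiplier theorem on ℝⁿ: Let 1 < p ≤ 2 ≤ q < ∞ and let σ : ℝⁿ → ℂ be a measurable function satisfying C := sup_{s>0} s · ( |{ξ ∈ ℝⁿ : |σ(ξ)| ≥ s}| )^{1/p − 1/q} < ∞. Then the Fourier multiplier operator A defined by (Af)^(ξ) = σ(ξ) f̂(ξ) extends to a bounded operator from L^p(ℝⁿ) to L^q(ℝⁿ) with ‖A‖_{L^p → L^q} ≲ C. -/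
open MeasureTheory Set SchwartzMap
open scoped ENNReal FourierTransform

/-!
For `1 < p < 2` and `1 / r = 1 / p - 1 / 2`, a weight `w` in weak `L^r` satisfies the
Hardy-Littlewood-Paley inequality `‖w f̂‖₂ ≲ ‖w‖_{r,∞} ‖f‖_p`. Indeed, the layer-cake formula writes
`‖w f̂‖₂²` as an integral over `s` of the `L²` mass of `f̂` on `{|w| ≥ s}`. At each level `s` split
`f` according to whether `|f| ^ (p - 2)` is at least a fixed multiple of `s ^ 2`. Where it is, `f`
is small and Plancherel applies; on the other part use `L¹ → L^∞` and the weak bound on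
`|{|w| ≥ s}|`. Tonelli's theorem turns both contributions into multiples of `‖f‖_p ^ p`.

For a symbol `σ`, write `|σ| = |σ| ^ a |σ| ^ b` with `a` and `b` proportional to `1 / p - 1 / 2` and
`1 / 2 - 1 / q`. Cauchy-Schwarz and the weighted inequality for both factors bound
`∫ |σ| |f̂| |φ̂|` by the weak norm of `σ`, the `L^p` norm of `f` and the norm of `φ` in the dual
of `L^q`. The multiplier theorem follows by Parseval's identity and duality.
-/

section WeakLp

variable {α E : Type*} [MeasurableSpace α] {μ : Measure α} [NormedAddCommGroup E] {f : α → E}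
  {θ s : ℝ}

/-- The weak `L^r` quasi-norm `sup_{s > 0} s · μ {|f| ≥ s} ^ (1 / r)`, parametrised by `θ = 1 / r`.
For `θ = 0` this is `∞` because `x ^ 0 = 1`; it is not the essential supremum. -/
noncomputable def weakLpNorm (f : α → E) (θ : ℝ) (μ : Measure α) : ℝ≥0∞ :=
  ⨆ s ∈ Ioi (0 : ℝ), ENNReal.ofReal s * μ {x | s ≤ ‖f x‖} ^ θ

theorem ofReal_mul_meas_rpow_le_weakLpNorm (f : α → E) (θ : ℝ) (μ : Measure α) (hs : 0 < s) :
    ENNReal.ofReal s * μ {x | s ≤ ‖f x‖} ^ θ ≤ weakLpNorm f θ μ :=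
  le_iSup₂ (f := fun (s : ℝ) (_ : s ∈ Ioi (0 : ℝ)) => ENNReal.ofReal s * μ {x | s ≤ ‖f x‖} ^ θ)
    s hs

theorem weakLpNorm_zero_right (f : α → E) (μ : Measure α) : weakLpNorm f 0 μ = ⊤ := by
  refine ENNReal.eq_top_of_forall_nnreal_le fun t => ?_
  have h := ofReal_mul_meas_rpow_le_weakLpNorm f 0 μ (s := t + 1) (by positivity)
  rw [ENNReal.rpow_zero, mul_one] at h
  refine le_trans ?_ h
  rw [← ENNReal.ofReal_coe_nnreal]
  exact ENNReal.ofReal_le_ofReal (by linarith)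

theorem meas_le_norm_le_ofReal_rpow_mul_weakLpNorm_rpow (f : α → E) (μ : Measure α)
    (hθ : 0 < θ) (hs : 0 < s) :
    μ {x | s ≤ ‖f x‖} ≤ ENNReal.ofReal (s ^ (-θ⁻¹)) * weakLpNorm f θ μ ^ θ⁻¹ := by
  have h := ofReal_mul_meas_rpow_le_weakLpNorm f θ μ hs
  rw [mul_comm, ← ENNReal.le_div_iff_mul_le (by simp [hs]) (by simp),
    ← ENNReal.le_rpow_inv_iff hθ, ENNReal.div_rpow_of_nonneg _ _ (by positivity)] at h
  rwa [← ENNReal.ofReal_rpow_of_pos hs, ENNReal.rpow_neg, mul_comm, ← div_eq_mul_inv]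

theorem ae_eq_zero_of_weakLpNorm_eq_zero (hθ : 0 < θ) (h : weakLpNorm f θ μ = 0) : f =ᵐ[μ] 0 := by
  have hlevel : ∀ k : ℕ, μ {x | 1 / ((k : ℝ) + 1) ≤ ‖f x‖} = 0 := fun k => by
    have hk := meas_le_norm_le_ofReal_rpow_mul_weakLpNorm_rpow f μ hθ
      (s := 1 / ((k : ℝ) + 1)) (by positivity)
    rwa [h, ENNReal.zero_rpow_of_pos (by positivity), mul_zero, le_zero_iff] at hk
  have hlt : ∀ᵐ x ∂μ, ∀ k : ℕ, ‖f x‖ < 1 / ((k : ℝ) + 1) := ae_all_iff.2 fun k => by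
    simpa only [ae_iff, not_lt] using hlevel k
  filter_upwards [hlt] with x hx
  by_contra h0
  obtain ⟨k, hk⟩ := exists_nat_one_div_lt (norm_pos_iff.2 h0)
  exact (hx k).not_gt hk

theorem weakLpNorm_norm_rpow_le {a : ℝ} (ha : 0 < a) :
    weakLpNorm (fun x => ‖f x‖ ^ a) (a * θ) μ ≤ weakLpNorm f θ μ ^ a := by
  refine iSup₂_le fun s (hs : 0 < s) => ?_
  have hset : {x | s ≤ ‖‖f x‖ ^ a‖} = {x | s ^ a⁻¹ ≤ ‖f x‖} := by
    ext x
    rw [mem_ofPred_eq, mem_ofPred_eq, Real.norm_of_nonneg (by positivity),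
      Real.rpow_inv_le_iff_of_pos hs.le (norm_nonneg _) ha]
  calc ENNReal.ofReal s * μ {x | s ≤ ‖‖f x‖ ^ a‖} ^ (a * θ)
      = (ENNReal.ofReal (s ^ a⁻¹) * μ {x | s ^ a⁻¹ ≤ ‖f x‖} ^ θ) ^ a := by
        rw [hset, ENNReal.mul_rpow_of_nonneg _ _ ha.le, ← ENNReal.rpow_mul, mul_comm θ a,
          ENNReal.ofReal_rpow_of_nonneg (by positivity) ha.le, Real.rpow_inv_rpow hs.le ha.ne']
    _ ≤ weakLpNorm f θ μ ^ a :=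
        ENNReal.rpow_le_rpow (ofReal_mul_meas_rpow_le_weakLpNorm f θ μ (by positivity)) ha.le

end WeakLp

section Lintegral

variable {α E : Type*} [MeasurableSpace α] {μ : Measure α} [NormedAddCommGroup E]

theorem add_sq_le_two_mul_sq_add_two_mul_sq (a b : ℝ≥0∞) :
    (a + b) ^ 2 ≤ 2 * a ^ 2 + 2 * b ^ 2 := by
  have h := ENNReal.rpow_add_le_mul_rpow_add_rpow a b one_le_two
  rw [show (2 : ℝ) - 1 = 1 by norm_num, ENNReal.rpow_one, mul_add] at h
  exact_mod_cast h

theorem eLpNorm_two_sq (f : α → E) : eLpNorm f 2 μ ^ 2 = ∫⁻ x, ‖f x‖ₑ ^ 2 ∂μ := by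
  simpa using eLpNorm_nnreal_pow_eq_lintegral (f := f) (μ := μ) (p := 2) two_ne_zero

theorem lintegral_enorm_mul_enorm_le {F : Type*} [NormedAddCommGroup F] {f : α → E} {g : α → F}
    (hf : AEStronglyMeasurable f μ) (hg : AEStronglyMeasurable g μ) :
    ∫⁻ x, ‖f x‖ₑ * ‖g x‖ₑ ∂μ ≤ eLpNorm f 2 μ * eLpNorm g 2 μ := by
  simpa only [eLpNorm_eq_lintegral_rpow_enorm_toReal two_ne_zero ENNReal.ofNat_ne_top,
    ENNReal.toReal_ofNat, Pi.mul_apply] using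
    ENNReal.lintegral_mul_le_Lp_mul_Lq μ Real.HolderConjugate.two_two hf.enorm hg.enorm

theorem eLpNorm_ofReal_rpow {p : ℝ} (hp : 0 < p) (f : α → E) :
    eLpNorm f (ENNReal.ofReal p) μ ^ p = ∫⁻ x, ‖f x‖ₑ ^ p ∂μ := by
  rw [eLpNorm_eq_lintegral_rpow_enorm_toReal (by simpa using hp) ENNReal.ofReal_ne_top,
    ENNReal.toReal_ofReal hp.le, ← ENNReal.rpow_mul, one_div_mul_cancel hp.ne', ENNReal.rpow_one]

theorem sq_lintegral_enorm_le_mul_lintegral_rpow {p : ℝ} {f : α → E}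
    (hf : AEStronglyMeasurable f μ) (hp : 0 ≤ p) (hp2 : p ≤ 2) :
    (∫⁻ x, ‖f x‖ₑ ∂μ) ^ 2 ≤ (∫⁻ x, ‖f x‖ₑ ^ p ∂μ) * ∫⁻ x, ‖f x‖ₑ ^ (2 - p) ∂μ := by
  have hsplit : ∀ x, ‖f x‖ₑ ^ (p / 2) * ‖f x‖ₑ ^ ((2 - p) / 2) = ‖f x‖ₑ := fun x => by
    rw [← ENNReal.rpow_add_of_nonneg _ _ (by linarith) (by linarith),
      show p / 2 + (2 - p) / 2 = 1 by ring, ENNReal.rpow_one]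
  have h := ENNReal.lintegral_mul_le_Lp_mul_Lq μ Real.HolderConjugate.two_two
    (hf.enorm.pow_const (p / 2)) (hf.enorm.pow_const ((2 - p) / 2))
  simp only [Pi.mul_apply, hsplit, ← ENNReal.rpow_mul, div_mul_cancel₀ _ (two_ne_zero' ℝ)] at h
  calc (∫⁻ x, ‖f x‖ₑ ∂μ) ^ 2
      ≤ ((∫⁻ x, ‖f x‖ₑ ^ p ∂μ) ^ (1 / 2 : ℝ) * (∫⁻ x, ‖f x‖ₑ ^ (2 - p) ∂μ) ^ (1 / 2 : ℝ)) ^ 2 := by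
        gcongr
    _ = (∫⁻ x, ‖f x‖ₑ ^ p ∂μ) * ∫⁻ x, ‖f x‖ₑ ^ (2 - p) ∂μ := by
        simp only [mul_pow, one_div, ← ENNReal.rpow_mul_natCast]
        norm_num

theorem lintegral_rpow_mul_eq_lintegral_setLIntegral_le_mul [SFinite μ] {u : α → ℝ}
    (hu0 : 0 ≤ᵐ[μ] u) (hu : AEMeasurable u μ) {g : α → ℝ≥0∞} (hg : AEMeasurable g μ) {p : ℝ}
    (hp : 0 < p) :
    ∫⁻ x, ENNReal.ofReal (u x ^ p) * g x ∂μ =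
      ENNReal.ofReal p *
        ∫⁻ s in Ioi 0, (∫⁻ x in {x | s ≤ u x}, g x ∂μ) * ENNReal.ofReal (s ^ (p - 1)) := by
  have hac := withDensity_absolutelyContinuous μ g
  have h := lintegral_rpow_eq_lintegral_meas_le_mul (μ.withDensity g) (hac.ae_le hu0)
    (hu.mono_ac hac) hp
  rw [lintegral_withDensity_eq_lintegral_mul₀ hg (hu.pow_const _).ennreal_ofReal] at h
  simpa only [Pi.mul_apply, mul_comm (g _), withDensity_apply'] using h

theorem lintegral_sq_mul_eq_two_mul_lintegral_setLIntegral_le [SFinite μ] {u : α → ℝ}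
    (hu0 : 0 ≤ᵐ[μ] u) (hu : AEMeasurable u μ) {g : α → ℝ≥0∞} (hg : AEMeasurable g μ) :
    ∫⁻ x, ENNReal.ofReal (u x) ^ 2 * g x ∂μ =
      2 * ∫⁻ s in Ioi 0, ENNReal.ofReal s * ∫⁻ x in {x | s ≤ u x}, g x ∂μ := by
  have h := lintegral_rpow_mul_eq_lintegral_setLIntegral_le_mul hu0 hu hg two_pos
  rw [ENNReal.ofReal_ofNat, show (2 : ℝ) - 1 = 1 by norm_num] at h
  simp only [Real.rpow_one, mul_comm _ (ENNReal.ofReal _)] at h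
  rw [← h]
  refine lintegral_congr_ae ?_
  filter_upwards [hu0] with x hx
  rw [← ENNReal.ofReal_pow hx, Real.rpow_two]

theorem lintegral_Ioi_mul_setLIntegral_lt [SFinite μ] {δ : α → ℝ} (hδ : AEMeasurable δ μ)
    (hδ0 : ∀ x, 0 ≤ δ x) {g : α → ℝ≥0∞} (hg : AEMeasurable g μ) {k : ℝ → ℝ≥0∞}
    (hk : Measurable k) :
    ∫⁻ s in Ioi 0, k s * ∫⁻ x in {x | δ x < s}, g x ∂μ =
      ∫⁻ x, (∫⁻ s in Ioi (δ x), k s) * g x ∂μ := by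
  set S : Set (ℝ × α) := {z | δ z.2 < z.1}
  have hS : NullMeasurableSet S ((volume.restrict (Ioi 0)).prod μ) :=
    nullMeasurableSet_lt hδ.comp_snd measurable_fst.aemeasurable
  have hF : AEMeasurable (S.indicator fun z => k z.1 * g z.2)
      ((volume.restrict (Ioi 0)).prod μ) :=
    ((hk.comp measurable_fst).aemeasurable.mul hg.comp_snd).indicator₀ hS
  calc ∫⁻ s in Ioi 0, k s * ∫⁻ x in {x | δ x < s}, g x ∂μ
      = ∫⁻ s in Ioi (0 : ℝ), ∫⁻ x, S.indicator (fun z => k z.1 * g z.2) (s, x) ∂μ := by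
        refine lintegral_congr fun s => ?_
        rw [← lintegral_const_mul'' _ hg.restrict,
          ← lintegral_indicator₀ (nullMeasurableSet_lt hδ aemeasurable_const)]
        rfl
    _ = ∫⁻ x, (∫⁻ s in Ioi (0 : ℝ), S.indicator (fun z => k z.1 * g z.2) (s, x)) ∂μ :=
        lintegral_lintegral_swap (f := fun s x => S.indicator (fun z => k z.1 * g z.2) (s, x)) hF
    _ = ∫⁻ x, (∫⁻ s in Ioi (δ x), k s) * g x ∂μ := by
        refine lintegral_congr fun x => ?_
        rw [← lintegral_mul_const _ hk, ← lintegral_indicator measurableSet_Ioi,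
          ← lintegral_indicator measurableSet_Ioi]
        refine lintegral_congr fun s => ?_
        by_cases hs : δ x < s
        · simp [S, indicator, hs, (hδ0 x).trans_lt hs]
        · simp [S, indicator, hs]

theorem lintegral_Ioi_ofReal_rpow_of_lt {a c : ℝ} (ha : a < -1) (hc : 0 < c) :
    ∫⁻ s in Ioi c, ENNReal.ofReal (s ^ a) = ENNReal.ofReal (-c ^ (a + 1) / (a + 1)) := by
  rw [← integral_Ioi_rpow_of_lt ha hc,
    ofReal_integral_eq_lintegral_ofReal (integrableOn_Ioi_rpow_of_lt ha hc)]
  filter_upwards [self_mem_ae_restrict measurableSet_Ioi] with s hs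
  exact Real.rpow_nonneg (hc.trans hs).le _

theorem lintegral_Ioi_mul_meas_mul_sq_setLIntegral_le {β G : Type*} [MeasurableSpace β]
    {ν : Measure β} [NormedAddCommGroup G] [SFinite μ] {p θ : ℝ} (hp : 0 ≤ p) (hp2 : p ≤ 2)
    (hθ : 0 < θ) (w : β → G) {f : α → E} (hf : AEStronglyMeasurable f μ) {δ : α → ℝ}
    (hδ : AEMeasurable δ μ) (hδ0 : ∀ x, 0 ≤ δ x) :
    ∫⁻ s in Ioi 0, ENNReal.ofReal s *
        (ν {y | s ≤ ‖w y‖} * (∫⁻ x in {x | δ x < s}, ‖f x‖ₑ ∂μ) ^ 2) ≤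
      weakLpNorm w θ ν ^ θ⁻¹ * (∫⁻ x, ‖f x‖ₑ ^ p ∂μ) *
        ∫⁻ x, (∫⁻ s in Ioi (δ x), ENNReal.ofReal (s ^ (1 - θ⁻¹))) * ‖f x‖ₑ ^ (2 - p) ∂μ := by
  set N := ∫⁻ x, ‖f x‖ₑ ^ p ∂μ
  have hweight : Measurable fun s : ℝ => ENNReal.ofReal (s ^ (1 - θ⁻¹)) := by fun_prop
  have hlevel (s : ℝ) (hs : 0 < s) : ENNReal.ofReal s *
        (ν {y | s ≤ ‖w y‖} * (∫⁻ x in {x | δ x < s}, ‖f x‖ₑ ∂μ) ^ 2) ≤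
      weakLpNorm w θ ν ^ θ⁻¹ * N *
        (ENNReal.ofReal (s ^ (1 - θ⁻¹)) * ∫⁻ x in {x | δ x < s}, ‖f x‖ₑ ^ (2 - p) ∂μ) :=
    calc ENNReal.ofReal s * (ν {y | s ≤ ‖w y‖} * (∫⁻ x in {x | δ x < s}, ‖f x‖ₑ ∂μ) ^ 2)
        ≤ ENNReal.ofReal s * (ENNReal.ofReal (s ^ (-θ⁻¹)) * weakLpNorm w θ ν ^ θ⁻¹ *
            (N * ∫⁻ x in {x | δ x < s}, ‖f x‖ₑ ^ (2 - p) ∂μ)) := by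
          gcongr
          · exact meas_le_norm_le_ofReal_rpow_mul_weakLpNorm_rpow w ν hθ hs
          · exact (sq_lintegral_enorm_le_mul_lintegral_rpow hf.restrict hp hp2).trans
              (mul_le_mul_left (setLIntegral_le_lintegral _ _) _)
      _ = _ := by
          rw [sub_eq_add_neg 1, Real.rpow_add hs, Real.rpow_one, ENNReal.ofReal_mul hs.le]
          ring
  calc _ ≤ ∫⁻ s in Ioi 0, weakLpNorm w θ ν ^ θ⁻¹ * N *
        (ENNReal.ofReal (s ^ (1 - θ⁻¹)) * ∫⁻ x in {x | δ x < s}, ‖f x‖ₑ ^ (2 - p) ∂μ) :=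
        setLIntegral_mono' measurableSet_Ioi hlevel
    _ = _ := by
      have hmeas : Measurable fun s =>
          ENNReal.ofReal (s ^ (1 - θ⁻¹)) * ∫⁻ x in {x | δ x < s}, ‖f x‖ₑ ^ (2 - p) ∂μ :=
        hweight.mul (Monotone.measurable fun _ _ hst =>
          lintegral_mono_set fun _ hx => lt_of_lt_of_le hx hst)
      rw [lintegral_const_mul _ hmeas,
        lintegral_Ioi_mul_setLIntegral_lt hδ hδ0 (hf.enorm.pow_const _) hweight]

theorem lintegral_Ioi_mul_rpow_mul_rpow_enorm {p r B : ℝ} (hp : 0 < p) (hp2 : p < 2) (hr : 2 < r)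
    (hpr : r * (2 - p) = 2 * p) (hB : 0 < B) (v : E) :
    (∫⁻ s in Ioi (B * ‖v‖ ^ ((p - 2) / 2)), ENNReal.ofReal (s ^ (1 - r))) * ‖v‖ₑ ^ (2 - p) =
      ENNReal.ofReal (B ^ (2 - r) / (r - 2)) * ‖v‖ₑ ^ p := by
  rcases eq_or_ne v 0 with rfl | hv
  · simp [ENNReal.zero_rpow_of_pos, hp, sub_pos.2 hp2]
  have hv0 : 0 < ‖v‖ := norm_pos_iff.2 hv
  have hexp : (p - 2) / 2 * (2 - r) + (2 - p) = p := by linear_combination hpr / 2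
  have hreal : -(B * ‖v‖ ^ ((p - 2) / 2)) ^ (1 - r + 1) / (1 - r + 1) * ‖v‖ ^ (2 - p) =
      B ^ (2 - r) / (r - 2) * ‖v‖ ^ p := by
    rw [show 1 - r + 1 = 2 - r by ring, Real.mul_rpow hB.le (by positivity), ← Real.rpow_mul hv0.le,
      ← neg_sub r 2, neg_div_neg_eq, neg_sub, mul_div_right_comm, mul_assoc, ← Real.rpow_add hv0,
      hexp]
  rw [lintegral_Ioi_ofReal_rpow_of_lt (by linarith) (by positivity), ← ofReal_norm,
    ENNReal.ofReal_rpow_of_pos hv0, ENNReal.ofReal_rpow_of_pos hv0,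
    ← ENNReal.ofReal_mul' (by positivity), ← ENNReal.ofReal_mul' (by positivity), hreal]

theorem ofReal_mul_rpow_sq_mul_enorm_sq {p B : ℝ} (hp : 0 < p) (hB : 0 ≤ B) (v : E) :
    ENNReal.ofReal (B * ‖v‖ ^ ((p - 2) / 2)) ^ 2 * ‖v‖ₑ ^ 2 = ENNReal.ofReal B ^ 2 * ‖v‖ₑ ^ p := by
  rcases eq_or_ne v 0 with rfl | hv
  · simp [ENNReal.zero_rpow_of_pos hp]
  have hv0 : 0 < ‖v‖ := norm_pos_iff.2 hv
  have hreal : (‖v‖ ^ ((p - 2) / 2) * ‖v‖) ^ 2 = ‖v‖ ^ p := by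
    rw [← Real.rpow_add_one hv0.ne', ← Real.rpow_mul_natCast hv0.le]
    ring_nf
  rw [← ofReal_norm, ENNReal.ofReal_rpow_of_pos hv0, ← hreal, ENNReal.ofReal_pow (by positivity),
    ENNReal.ofReal_mul hB, ENNReal.ofReal_mul (by positivity)]
  ring

end Lintegral

section Duality

variable {α 𝕜 F : Type*} [MeasurableSpace α] {μ : Measure α} [RCLike 𝕜] [NormedAddCommGroup F]
  [InnerProductSpace 𝕜 F] {h : α → F} {q q' : ℝ} {M : ℝ≥0∞}

variable (𝕜) in
/-- The duality map `v ↦ ‖v‖ ^ (q - 2) • v`; composed with `h ∈ L^q` it is, up to normalisation, the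
extremiser in the duality between `L^q` and its conjugate space. -/
noncomputable def dualityMap (q : ℝ) (v : F) : F := ((‖v‖ ^ (q - 2) : ℝ) : 𝕜) • v

theorem norm_dualityMap (hq : 1 < q) (v : F) : ‖dualityMap 𝕜 q v‖ = ‖v‖ ^ (q - 1) := by
  rcases eq_or_ne v 0 with rfl | hv
  · simp [dualityMap, Real.zero_rpow (sub_pos.2 hq).ne']
  · rw [dualityMap, norm_smul, RCLike.norm_ofReal, abs_of_nonneg (by positivity),
      ← Real.rpow_add_one (norm_ne_zero_iff.2 hv)]
    ring_nf

theorem inner_dualityMap_self (hq : q ≠ 0) (v : F) :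
    inner 𝕜 (dualityMap 𝕜 q v) v = ((‖v‖ ^ q : ℝ) : 𝕜) := by
  rcases eq_or_ne v 0 with rfl | hv
  · simp [Real.zero_rpow hq]
  · rw [dualityMap, inner_smul_left, RCLike.conj_ofReal, inner_self_eq_norm_sq_to_K,
      ← RCLike.ofReal_pow, ← RCLike.ofReal_mul, ← Real.rpow_two,
      ← Real.rpow_add (norm_pos_iff.2 hv), sub_add_cancel]

theorem integrable_dualityMap_comp (hq : 1 < q) (hh : MemLp h (ENNReal.ofReal (q - 1)) μ) :
    Integrable (fun x => dualityMap 𝕜 q (h x)) μ := by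
  have hmeas : AEStronglyMeasurable (fun x => dualityMap 𝕜 q (h x)) μ :=
    (RCLike.continuous_ofReal.comp_aestronglyMeasurable
      (hh.1.norm.aemeasurable.pow_const _).aestronglyMeasurable).smul hh.1
  rw [← integrable_norm_iff hmeas]
  simpa only [norm_dualityMap hq, ENNReal.toReal_ofReal (sub_pos.2 hq).le] using
    hh.integrable_norm_rpow (by simpa using hq) ENNReal.ofReal_ne_top

theorem eLpNorm_dualityMap_comp (hqq' : q.HolderConjugate q') (h : α → F) :
    eLpNorm (fun x => dualityMap 𝕜 q (h x)) (ENNReal.ofReal q') μ =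
      eLpNorm h (ENNReal.ofReal q) μ ^ (q - 1) := by
  have hq : 0 < q - 1 := sub_pos.2 hqq'.lt
  calc eLpNorm (fun x => dualityMap 𝕜 q (h x)) (ENNReal.ofReal q') μ
      = eLpNorm (fun x => ‖h x‖ ^ (q - 1)) (ENNReal.ofReal q') μ :=
        eLpNorm_congr_norm_ae (ae_of_all _ fun x => by
          rw [norm_dualityMap hqq'.lt, Real.norm_of_nonneg (by positivity)])
    _ = eLpNorm h (ENNReal.ofReal q) μ ^ (q - 1) := by
        rw [eLpNorm_norm_rpow h hq, ← ENNReal.ofReal_mul hqq'.symm.nonneg, mul_comm q',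
          hqq'.sub_one_mul_conj]

theorem enorm_integral_inner_dualityMap (hq : 0 < q) (hh : MemLp h (ENNReal.ofReal q) μ) :
    ‖∫ x, inner 𝕜 (dualityMap 𝕜 q (h x)) (h x) ∂μ‖ₑ = eLpNorm h (ENNReal.ofReal q) μ ^ q := by
  have hint : Integrable (fun x => ‖h x‖ ^ q) μ := by
    simpa only [ENNReal.toReal_ofReal hq.le] using
      hh.integrable_norm_rpow (by simpa using hq) ENNReal.ofReal_ne_top
  have hnonneg : 0 ≤ ∫ x, ‖h x‖ ^ q ∂μ := integral_nonneg fun x => by positivity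
  simp only [inner_dualityMap_self hq.ne', integral_ofReal]
  rw [← ofReal_norm, RCLike.norm_of_nonneg hnonneg,
    ofReal_integral_eq_lintegral_ofReal hint (ae_of_all _ fun x => by positivity),
    eLpNorm_ofReal_rpow hq]
  refine lintegral_congr fun x => ?_
  rw [← ENNReal.ofReal_rpow_of_nonneg (norm_nonneg _) hq.le, ofReal_norm]

theorem eLpNorm_le_of_forall_enorm_integral_inner_le_of_isFiniteMeasure [IsFiniteMeasure μ]
    (hqq' : q.HolderConjugate q') (hh : MemLp h ⊤ μ)
    (H : ∀ φ : α → F, Integrable φ μ →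
      ‖∫ x, inner 𝕜 (φ x) (h x) ∂μ‖ₑ ≤ M * eLpNorm φ (ENNReal.ofReal q') μ) :
    eLpNorm h (ENNReal.ofReal q) μ ≤ M := by
  have hLp (r : ℝ≥0∞) : MemLp h r μ := hh.mono_exponent le_top
  set X := eLpNorm h (ENNReal.ofReal q) μ
  have key : X ^ q ≤ M * X ^ (q - 1) := by
    simpa only [enorm_integral_inner_dualityMap hqq'.pos (hLp _),
      eLpNorm_dualityMap_comp hqq'] using
      H _ (integrable_dualityMap_comp (𝕜 := 𝕜) hqq'.lt (hLp _))
  rcases eq_or_ne X 0 with hX | hX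
  · simp [hX]
  have hX_top : X ≠ ⊤ := (hLp _).2.ne
  have hmul : X ^ q = X * X ^ (q - 1) := by
    rw [← add_sub_cancel 1 q, ENNReal.rpow_add _ _ hX hX_top, ENNReal.rpow_one,
      add_sub_cancel_left]
  rw [hmul] at key
  exact (ENNReal.mul_le_mul_iff_left (ENNReal.rpow_pos hX.bot_lt hX_top).ne'
    (ENNReal.rpow_ne_top_of_ne_zero hX hX_top)).1 key

theorem eLpNorm_le_of_forall_enorm_integral_inner_le [SigmaFinite μ]
    (hqq' : q.HolderConjugate q') (hh : MemLp h ⊤ μ)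
    (H : ∀ φ : α → F, Integrable φ μ →
      ‖∫ x, inner 𝕜 (φ x) (h x) ∂μ‖ₑ ≤ M * eLpNorm φ (ENNReal.ofReal q') μ) :
    eLpNorm h (ENNReal.ofReal q) μ ≤ M := by
  rw [← ENNReal.rpow_le_rpow_iff hqq'.pos, eLpNorm_ofReal_rpow hqq'.pos]
  -- On a set of finite measure the bounded function `h` belongs to every `L^r`.
  refine lintegral_le_of_forall_fin_meas_le _ fun s hs hμs => ?_
  rw [← eLpNorm_ofReal_rpow hqq'.pos, ENNReal.rpow_le_rpow_iff hqq'.pos]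
  have : IsFiniteMeasure (μ.restrict s) := isFiniteMeasure_restrict.2 hμs
  refine eLpNorm_le_of_forall_enorm_integral_inner_le_of_isFiniteMeasure (𝕜 := 𝕜) hqq'
    (hh.restrict s) fun φ hφ => ?_
  have hind (x : α) :
      inner 𝕜 (s.indicator φ x) (h x) = s.indicator (fun x => inner 𝕜 (φ x) (h x)) x := by
    by_cases hx : x ∈ s <;> simp [hx]
  simpa only [hind, integral_indicator hs, eLpNorm_indicator_eq_eLpNorm_restrict hs] using
    H (s.indicator φ) ((integrable_indicator_iff hs).2 hφ)

end Duality

section Fourier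

variable {V E H : Type*} [NormedAddCommGroup V] [InnerProductSpace ℝ V] [FiniteDimensional ℝ V]
  [MeasurableSpace V] [BorelSpace V] [NormedAddCommGroup E] [NormedSpace ℂ E]
  [NormedAddCommGroup H] [InnerProductSpace ℂ H] [CompleteSpace H]

theorem continuous_fourier_of_integrable {f : V → E} (hf : Integrable f) : Continuous (𝓕 f) :=
  VectorFourier.fourierIntegral_continuous Real.continuous_fourierChar (by exact continuous_inner)
    hf

theorem enorm_fourier_le_lintegral (f : V → E) (ξ : V) : ‖𝓕 f ξ‖ₑ ≤ ∫⁻ x, ‖f x‖ₑ := by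
  rw [Real.fourier_eq]
  refine (enorm_integral_le_lintegral_enorm _).trans_eq (lintegral_congr fun x => ?_)
  rw [← ofReal_norm, ← ofReal_norm, Circle.norm_smul]

theorem fourier_add_of_integrable {f g : V → E} (hf : Integrable f) (hg : Integrable g) :
    𝓕 (f + g) = 𝓕 f + 𝓕 g :=
  VectorFourier.fourierIntegral_add Real.continuous_fourierChar (by exact continuous_inner) hf hg

theorem fourier_eq_zero_of_ae_eq_zero {f : V → E} (hf : f =ᵐ[volume] 0) : 𝓕 f = 0 := by
  ext ξ
  rw [Real.fourier_congr_ae hf]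
  simp [Real.fourier_eq]

theorem fourierInv_eq_zero_of_not_integrable {f : V → E} (hf : ¬ Integrable f) : 𝓕⁻ f = 0 := by
  ext x
  rw [Real.fourierInv_eq_fourier_neg]
  exact integral_undef ((Real.fourierIntegral_convergent_iff (-x)).not.2 hf)

theorem memLp_top_fourierInv {f : V → E} (hf : Integrable f) : MemLp (𝓕⁻ f) ⊤ := by
  have hcont : Continuous (𝓕⁻ f) := by
    simpa only [Real.fourierInv_eq_fourier_comp_neg] using
      continuous_fourier_of_integrable hf.comp_neg
  refine ⟨hcont.aestronglyMeasurable, ?_⟩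
  rw [eLpNorm_exponent_top]
  refine (eLpNormEssSup_le_of_ae_enorm_bound (ae_of_all _ fun x => ?_)).trans_lt hf.2
  rw [Real.fourierInv_eq_fourier_neg]
  exact enorm_fourier_le_lintegral f (-x)

theorem integral_inner_fourier_eq {f g : V → H} (hf : Integrable f) (hg : Integrable g) :
    ∫ ξ, inner ℂ (𝓕 f ξ) (g ξ) = ∫ x, inner ℂ (f x) (𝓕⁻ g x) := by
  have h := VectorFourier.integral_sesq_fourierIntegral_eq_neg_flip (L := innerₗ V)
    (μ := volume) (ν := volume) (innerSL ℂ) Real.continuous_fourierChar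
    (by exact continuous_inner) hf hg
  rw [flip_innerₗ] at h
  exact h

theorem fourier_ae_eq_fourier_toLp {f : V → H} (hf : Integrable f) (hf2 : MemLp f 2) :
    𝓕 f =ᵐ[volume] (𝓕 (hf2.toLp f) : Lp H 2 (volume : Measure V)) := by
  -- Both sides define the same tempered distribution: move `𝓕` onto the test function.
  refine ae_eq_of_integral_contDiff_smul_eq
    (continuous_fourier_of_integrable hf).locallyIntegrable
    ((Lp.memLp _).locallyIntegrable one_le_two) fun g hg hg_supp => ?_
  set G : 𝓢(V, ℂ) := (hg_supp.comp_left (g := ((↑) : ℝ → ℂ)) rfl).toSchwartzMap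
    (Complex.ofRealCLM.contDiff.comp hg)
  have hG (u : V → H) : ∫ x, g x • u x = ∫ x, G x • u x :=
    integral_congr_ae (ae_of_all _ fun x => (Complex.coe_smul (g x) (u x)).symm)
  have hflip : ∫ ξ, G ξ • 𝓕 f ξ = ∫ x, 𝓕 (⇑G) x • f x := by
    have h := VectorFourier.integral_fourierIntegral_smul_eq_flip (L := innerₗ V)
      (μ := volume) (ν := volume) Real.continuous_fourierChar (by exact continuous_inner)
      G.integrable hf
    rw [flip_innerₗ] at h
    exact h.symm
  have hdistrib := congrArg (· G) (Lp.fourier_toTemperedDistribution_eq (hf2.toLp f))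
  simp only [TemperedDistribution.fourier_apply, Lp.toTemperedDistribution_apply] at hdistrib
  rw [hG, hG, hflip, ← hdistrib]
  refine integral_congr_ae ?_
  filter_upwards [hf2.coeFn_toLp] with x hx
  rw [hx, SchwartzMap.fourier_coe]

theorem eLpNorm_fourier_le {f : V → H} (hf : Integrable f) : eLpNorm (𝓕 f) 2 ≤ eLpNorm f 2 := by
  rcases eq_or_ne (eLpNorm f 2) ⊤ with htop | htop
  · exact htop ▸ le_top
  have hf2 : MemLp f 2 := ⟨hf.1, htop.lt_top⟩
  have h := congrArg ENNReal.ofReal (Lp.norm_fourier_eq (hf2.toLp f))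
  rw [ofReal_norm, ofReal_norm, Lp.enorm_def, Lp.enorm_def, eLpNorm_congr_ae hf2.coeFn_toLp,
    ← eLpNorm_congr_ae (fourier_ae_eq_fourier_toLp hf hf2)] at h
  exact h.le

theorem lintegral_enorm_fourier_sq_le {f : V → H} (hf : Integrable f) :
    ∫⁻ ξ, ‖𝓕 f ξ‖ₑ ^ 2 ≤ ∫⁻ x, ‖f x‖ₑ ^ 2 := by
  rw [← eLpNorm_two_sq, ← eLpNorm_two_sq]
  exact pow_le_pow_left' (eLpNorm_fourier_le hf) 2

theorem setLIntegral_enorm_fourier_add_sq_le {f g : V → H} (hf : Integrable f) (hg : Integrable g)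
    (t : Set V) :
    ∫⁻ ξ in t, ‖𝓕 (f + g) ξ‖ₑ ^ 2 ≤
      2 * (volume t * (∫⁻ x, ‖f x‖ₑ) ^ 2) + 2 * ∫⁻ x, ‖g x‖ₑ ^ 2 := by
  have hpoint (ξ : V) : ‖𝓕 (f + g) ξ‖ₑ ^ 2 ≤ 2 * (∫⁻ x, ‖f x‖ₑ) ^ 2 + 2 * ‖𝓕 g ξ‖ₑ ^ 2 := by
    rw [fourier_add_of_integrable hf hg, Pi.add_apply]
    calc ‖𝓕 f ξ + 𝓕 g ξ‖ₑ ^ 2 ≤ ((∫⁻ x, ‖f x‖ₑ) + ‖𝓕 g ξ‖ₑ) ^ 2 := by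
          gcongr
          exact (enorm_add_le _ _).trans (add_le_add_left (enorm_fourier_le_lintegral f ξ) _)
      _ ≤ _ := add_sq_le_two_mul_sq_add_two_mul_sq _ _
  calc ∫⁻ ξ in t, ‖𝓕 (f + g) ξ‖ₑ ^ 2
      ≤ ∫⁻ ξ in t, (2 * (∫⁻ x, ‖f x‖ₑ) ^ 2 + 2 * ‖𝓕 g ξ‖ₑ ^ 2) := lintegral_mono hpoint
    _ = 2 * (volume t * (∫⁻ x, ‖f x‖ₑ) ^ 2) + 2 * ∫⁻ ξ in t, ‖𝓕 g ξ‖ₑ ^ 2 := by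
        rw [lintegral_add_left measurable_const, setLIntegral_const,
          lintegral_const_mul' _ _ ENNReal.ofNat_ne_top]
        ring
    _ ≤ _ :=
        add_le_add le_rfl (mul_le_mul' le_rfl
          ((setLIntegral_le_lintegral t _).trans (lintegral_enorm_fourier_sq_le hg)))

theorem setLIntegral_enorm_fourier_sq_le {f : V → H} (hf : Integrable f) {s : Set V}
    (hs : NullMeasurableSet s) (t : Set V) :
    ∫⁻ ξ in t, ‖𝓕 f ξ‖ₑ ^ 2 ≤
      2 * (volume t * (∫⁻ x in sᶜ, ‖f x‖ₑ) ^ 2) + 2 * ∫⁻ x in s, ‖f x‖ₑ ^ 2 := by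
  have h := setLIntegral_enorm_fourier_add_sq_le (hf.indicator₀ hs.compl) (hf.indicator₀ hs) t
  have hsq (x : V) :
      s.indicator (fun x => ‖f x‖ₑ) x ^ 2 = s.indicator (fun x => ‖f x‖ₑ ^ 2) x := by
    by_cases hx : x ∈ s <;> simp [hx]
  simpa only [indicator_compl_add_self, enorm_indicator_eq_indicator_enorm, hsq,
    lintegral_indicator₀ hs, lintegral_indicator₀ hs.compl] using h

theorem lintegral_sq_mul_enorm_fourier_sq_le {f : V → H} (hf : Integrable f) {w δ : V → ℝ}
    (hw : AEMeasurable w) (hδ : AEMeasurable δ) (hδ0 : ∀ x, 0 ≤ δ x) :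
    ∫⁻ ξ, ‖w ξ‖ₑ ^ 2 * ‖𝓕 f ξ‖ₑ ^ 2 ≤
      4 * (∫⁻ s in Ioi 0, ENNReal.ofReal s *
        (volume {ξ | s ≤ ‖w ξ‖} * (∫⁻ x in {x | δ x < s}, ‖f x‖ₑ) ^ 2)) +
      2 * ∫⁻ x, ENNReal.ofReal (δ x) ^ 2 * ‖f x‖ₑ ^ 2 := by
  have hmeas : Measurable fun s : ℝ => ENNReal.ofReal s * ∫⁻ x in {x | s ≤ δ x}, ‖f x‖ₑ ^ 2 :=
    ENNReal.measurable_ofReal.mul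
      (Antitone.measurable fun _ _ hst => lintegral_mono_set fun _ hx => hst.trans hx)
  have hlevel (s : ℝ) : ∫⁻ ξ in {ξ | s ≤ ‖w ξ‖}, ‖𝓕 f ξ‖ₑ ^ 2 ≤
      2 * (volume {ξ | s ≤ ‖w ξ‖} * (∫⁻ x in {x | δ x < s}, ‖f x‖ₑ) ^ 2) +
        2 * ∫⁻ x in {x | s ≤ δ x}, ‖f x‖ₑ ^ 2 := by
    simpa only [compl_ofPred, not_le] using setLIntegral_enorm_fourier_sq_le hf
      (nullMeasurableSet_le aemeasurable_const hδ) {ξ | s ≤ ‖w ξ‖}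
  calc ∫⁻ ξ, ‖w ξ‖ₑ ^ 2 * ‖𝓕 f ξ‖ₑ ^ 2
      = 2 * ∫⁻ s in Ioi 0, ENNReal.ofReal s * ∫⁻ ξ in {ξ | s ≤ ‖w ξ‖}, ‖𝓕 f ξ‖ₑ ^ 2 := by
        rw [← lintegral_sq_mul_eq_two_mul_lintegral_setLIntegral_le
          (ae_of_all _ fun ξ => norm_nonneg (w ξ)) hw.norm
          ((continuous_fourier_of_integrable hf).enorm.measurable.pow_const 2).aemeasurable]
        simp only [ofReal_norm]
    _ ≤ 2 * ∫⁻ s in Ioi 0,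
          (2 * (ENNReal.ofReal s *
              (volume {ξ | s ≤ ‖w ξ‖} * (∫⁻ x in {x | δ x < s}, ‖f x‖ₑ) ^ 2)) +
            2 * (ENNReal.ofReal s * ∫⁻ x in {x | s ≤ δ x}, ‖f x‖ₑ ^ 2)) := by
        gcongr with s
        refine (mul_le_mul_right (hlevel s) _).trans_eq ?_
        ring
    _ = _ := by
        rw [lintegral_add_right _ (hmeas.const_mul 2),
          lintegral_const_mul' _ _ ENNReal.ofNat_ne_top,
          lintegral_const_mul' _ _ ENNReal.ofNat_ne_top,
          ← lintegral_sq_mul_eq_two_mul_lintegral_setLIntegral_le (ae_of_all _ hδ0) hδ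
            (hf.1.enorm.pow_const 2)]
        ring

theorem two_lt_and_mul_two_sub_eq_of_eq_inv {p r : ℝ} (hp : 1 < p) (hp2 : p < 2)
    (hr : r = (1 / p - 1 / 2)⁻¹) : 2 < r ∧ r * (2 - p) = 2 * p := by
  have hp0 : 0 < p := by linarith
  have hr' : r = 2 * p / (2 - p) := by
    rw [hr, div_sub_div _ _ hp0.ne' two_ne_zero, inv_div]
    ring
  have : 0 < 2 - p := sub_pos.2 hp2
  refine ⟨?_, by rw [hr', div_mul_cancel₀ _ this.ne']⟩
  rw [hr', lt_div_iff₀ this]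
  linarith

theorem lintegral_sq_mul_enorm_fourier_sq_le_of_pos {p r B : ℝ} (hp : 1 < p) (hp2 : p < 2)
    (hr : r = (1 / p - 1 / 2)⁻¹) (hB : 0 < B) {f : V → H} (hf : Integrable f) {w : V → ℝ}
    (hw : AEMeasurable w) :
    ∫⁻ ξ, ‖w ξ‖ₑ ^ 2 * ‖𝓕 f ξ‖ₑ ^ 2 ≤
      4 * (weakLpNorm w (1 / p - 1 / 2) volume ^ r * (∫⁻ x, ‖f x‖ₑ ^ p) *
        (ENNReal.ofReal (B ^ (2 - r) / (r - 2)) * ∫⁻ x, ‖f x‖ₑ ^ p)) +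
      2 * (ENNReal.ofReal B ^ 2 * ∫⁻ x, ‖f x‖ₑ ^ p) := by
  have hp0 : 0 < p := by linarith
  have hθ : 0 < 1 / p - 1 / 2 := sub_pos.2 (one_div_lt_one_div_of_lt hp0 hp2)
  obtain ⟨hr2, hpr⟩ := two_lt_and_mul_two_sub_eq_of_eq_inv hp hp2 hr
  have hδ : AEMeasurable fun x => B * ‖f x‖ ^ ((p - 2) / 2) :=
    (hf.1.norm.aemeasurable.pow_const _).const_mul B
  have hδ0 (x : V) : 0 ≤ B * ‖f x‖ ^ ((p - 2) / 2) := by positivity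
  have hN : AEMeasurable (fun x => ‖f x‖ₑ ^ p) := hf.1.enorm.pow_const p
  refine (lintegral_sq_mul_enorm_fourier_sq_le hf hw hδ hδ0).trans ?_
  gcongr
  · refine (lintegral_Ioi_mul_meas_mul_sq_setLIntegral_le hp0.le hp2.le hθ w hf.1 hδ
      hδ0).trans_eq ?_
    simp only [← hr, lintegral_Ioi_mul_rpow_mul_rpow_enorm hp0 hp2 hr2 hpr hB]
    rw [lintegral_const_mul'' _ hN]
  · simp only [ofReal_mul_rpow_sq_mul_enorm_sq hp0 hB.le]
    rw [lintegral_const_mul'' _ hN]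

theorem four_mul_add_two_mul_eq {p r d m : ℝ} (hp : 1 < p) (hr2 : r ≠ 2)
    (hpr : r * (2 - p) = 2 * p) (hd : 0 < d) (hm : 0 < m) :
    4 * (d ^ r * m ^ p * ((d * m ^ (1 - p / 2)) ^ (2 - r) / (r - 2) * m ^ p)) +
      2 * ((d * m ^ (1 - p / 2)) ^ 2 * m ^ p) = p / (p - 1) * (d * m) ^ 2 := by
  have hd2 : d ^ r * d ^ (2 - r) = d ^ 2 := by
    rw [← Real.rpow_add hd, add_sub_cancel, Real.rpow_two]
  have hm2 : m ^ p * (m ^ ((1 - p / 2) * (2 - r)) * m ^ p) = m ^ 2 := by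
    rw [← Real.rpow_add hm, ← Real.rpow_add hm, ← Real.rpow_two]
    congr 1
    linear_combination -hpr / 2
  have hm2' : (m ^ (1 - p / 2)) ^ 2 * m ^ p = m ^ 2 := by
    rw [← Real.rpow_mul_natCast hm.le, ← Real.rpow_add hm, ← Real.rpow_two]
    congr 1
    push_cast
    ring
  have hconst : 4 / (r - 2) + 2 = p / (p - 1) := by
    have : r - 2 ≠ 0 := sub_ne_zero.2 hr2
    have : p - 1 ≠ 0 := (sub_pos.2 hp).ne'
    field_simp
    linear_combination -hpr
  rw [Real.mul_rpow hd.le (by positivity), ← Real.rpow_mul hm.le]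
  calc _ = 4 / (r - 2) * ((d ^ r * d ^ (2 - r)) *
        (m ^ p * (m ^ ((1 - p / 2) * (2 - r)) * m ^ p))) +
        2 * (d ^ 2 * ((m ^ (1 - p / 2)) ^ 2 * m ^ p)) := by ring
    _ = p / (p - 1) * (d * m) ^ 2 := by
      rw [hd2, hm2, hm2', ← hconst]
      ring

theorem eLpNorm_smul_fourier_le_of_eq_ofReal {p d m : ℝ} (hp : 1 < p) (hp2 : p < 2) {f : V → H}
    (hf : Integrable f) {w : V → ℝ} (hw : AEMeasurable w) (hd : 0 < d) (hm : 0 < m)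
    (hwd : weakLpNorm w (1 / p - 1 / 2) volume = ENNReal.ofReal d)
    (hfm : eLpNorm f (ENNReal.ofReal p) = ENNReal.ofReal m) :
    eLpNorm (fun ξ => w ξ • 𝓕 f ξ) 2 ≤ ENNReal.ofReal (√(p / (p - 1)) * (d * m)) := by
  obtain ⟨r, hr⟩ : ∃ r, r = (1 / p - 1 / 2)⁻¹ := ⟨_, rfl⟩
  obtain ⟨hr2, hpr⟩ := two_lt_and_mul_two_sub_eq_of_eq_inv hp hp2 hr
  -- Splitting with this `B` makes both contributions multiples of `(d * m) ^ 2`.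
  have hB : 0 < d * m ^ (1 - p / 2) := by positivity
  have hr0 : 0 < r - 2 := sub_pos.2 hr2
  have hconst : 0 ≤ p / (p - 1) := div_nonneg (by linarith) (by linarith)
  have h := lintegral_sq_mul_enorm_fourier_sq_le_of_pos hp hp2 hr hB hf hw
  simp only [← eLpNorm_ofReal_rpow (zero_lt_one.trans hp), hwd, hfm, ENNReal.ofReal_rpow_of_pos hd,
    ENNReal.ofReal_rpow_of_pos hm] at h
  rw [← ENNReal.pow_le_pow_left_iff two_ne_zero, eLpNorm_two_sq,
    ← ENNReal.ofReal_pow (by positivity), mul_pow (√_), Real.sq_sqrt hconst,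
    ← four_mul_add_two_mul_eq hp hr2.ne' hpr hd hm,
    ENNReal.ofReal_add (by positivity) (by positivity)]
  simp (disch := positivity) only [ENNReal.ofReal_mul, ENNReal.ofReal_pow, ENNReal.ofReal_ofNat]
    at h ⊢
  simpa only [enorm_smul, mul_pow] using h

theorem eLpNorm_smul_fourier_le_of_lt_two {p : ℝ} (hp : 1 < p) (hp2 : p < 2) {f : V → H}
    (hf : Integrable f) {w : V → ℝ} (hw : AEMeasurable w) :
    eLpNorm (fun ξ => w ξ • 𝓕 f ξ) 2 ≤ ENNReal.ofReal √(p / (p - 1)) *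
      (weakLpNorm w (1 / p - 1 / 2) volume * eLpNorm f (ENNReal.ofReal p)) := by
  have hp0 : 0 < p := by linarith
  have hθ : 0 < 1 / p - 1 / 2 := sub_pos.2 (one_div_lt_one_div_of_lt hp0 hp2)
  have hconst : ENNReal.ofReal √(p / (p - 1)) ≠ 0 := by
    have : 0 < p / (p - 1) := div_pos hp0 (sub_pos.2 hp)
    simpa using this
  set D := weakLpNorm w (1 / p - 1 / 2) volume
  set m := eLpNorm f (ENNReal.ofReal p)
  rcases eq_or_ne D 0 with hD0 | hD0
  · have hw0 : (fun ξ => w ξ • 𝓕 f ξ) =ᵐ[volume] 0 := by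
      filter_upwards [ae_eq_zero_of_weakLpNorm_eq_zero hθ hD0] with ξ hξ
      simp [hξ]
    simp [eLpNorm_congr_ae hw0]
  rcases eq_or_ne m 0 with hm0 | hm0
  · have hf0 : f =ᵐ[volume] 0 := (eLpNorm_eq_zero_iff hf.1 (by simpa using hp0)).1 hm0
    simp [fourier_eq_zero_of_ae_eq_zero hf0]
  rcases eq_or_ne D ⊤ with hD_top | hD_top
  · simp [hD_top, ENNReal.top_mul hm0, ENNReal.mul_top hconst]
  rcases eq_or_ne m ⊤ with hm_top | hm_top
  · simp [hm_top, ENNReal.mul_top hD0, ENNReal.mul_top hconst]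
  have h := eLpNorm_smul_fourier_le_of_eq_ofReal hp hp2 hf hw (ENNReal.toReal_pos hD0 hD_top)
    (ENNReal.toReal_pos hm0 hm_top) (ENNReal.ofReal_toReal hD_top).symm
    (ENNReal.ofReal_toReal hm_top).symm
  rwa [ENNReal.ofReal_mul (Real.sqrt_nonneg _), ENNReal.ofReal_mul ENNReal.toReal_nonneg,
    ENNReal.ofReal_toReal hD_top, ENNReal.ofReal_toReal hm_top] at h

theorem eLpNorm_norm_rpow_smul_fourier_le {G : Type*} [NormedAddCommGroup G] {p a θ : ℝ}
    (hp : 1 < p) (hp2 : p ≤ 2) (hθ : 0 < θ) (haθ : a * θ = 1 / p - 1 / 2) {σ : V → G}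
    (hσ : AEStronglyMeasurable σ) {f : V → H} (hf : Integrable f) :
    eLpNorm (fun ξ => ‖σ ξ‖ ^ a • 𝓕 f ξ) 2 ≤ ENNReal.ofReal √(p / (p - 1)) *
      (weakLpNorm σ θ volume ^ a * eLpNorm f (ENNReal.ofReal p)) := by
  rcases hp2.eq_or_lt with rfl | hp2
  · obtain rfl : a = 0 := by simpa [hθ.ne'] using haθ
    have hconst : 1 ≤ ENNReal.ofReal √(2 / (2 - 1)) := by norm_num
    simpa using (eLpNorm_fourier_le hf).trans (le_mul_of_one_le_left' hconst)
  · have ha : 0 < a := by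
      refine pos_of_mul_pos_left ?_ hθ.le
      rw [haθ, sub_pos]
      exact one_div_lt_one_div_of_lt (by linarith) hp2
    refine (eLpNorm_smul_fourier_le_of_lt_two hp hp2 hf (hσ.norm.aemeasurable.pow_const a)).trans ?_
    rw [← haθ]
    gcongr
    exact weakLpNorm_norm_rpow_le ha

theorem enorm_norm_rpow_smul_mul_enorm_norm_rpow_smul {G F : Type*} [NormedAddCommGroup G]
    [NormedAddCommGroup F] [NormedSpace ℝ F] {a b : ℝ} (ha : 0 ≤ a) (hb : 0 ≤ b) (hab : a + b = 1)
    (v : G) (x y : F) :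
    ‖‖v‖ ^ a • x‖ₑ * ‖‖v‖ ^ b • y‖ₑ = ‖v‖ₑ * (‖x‖ₑ * ‖y‖ₑ) := by
  have henorm {c : ℝ} (hc : 0 ≤ c) : ‖‖v‖ ^ c‖ₑ = ‖v‖ₑ ^ c := by
    rw [Real.enorm_of_nonneg (by positivity), ← ENNReal.ofReal_rpow_of_nonneg (norm_nonneg v) hc,
      ofReal_norm]
  rw [enorm_smul, enorm_smul, henorm ha, henorm hb, mul_mul_mul_comm,
    ← ENNReal.rpow_add_of_nonneg _ _ ha hb, hab, ENNReal.rpow_one]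

theorem lintegral_enorm_mul_enorm_fourier_mul_enorm_fourier_le {G : Type*} [NormedAddCommGroup G]
    {p₁ p₂ θ : ℝ} (hp₁ : 1 < p₁) (hp₁_le : p₁ ≤ 2) (hp₂ : 1 < p₂) (hp₂_le : p₂ ≤ 2)
    (hθ : 0 < θ) (hθp : θ = 1 / p₁ + 1 / p₂ - 1) {σ : V → G} (hσ : AEStronglyMeasurable σ)
    {f φ : V → H} (hf : Integrable f) (hφ : Integrable φ) :
    ∫⁻ ξ, ‖σ ξ‖ₑ * (‖𝓕 f ξ‖ₑ * ‖𝓕 φ ξ‖ₑ) ≤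
      ENNReal.ofReal (√(p₁ / (p₁ - 1)) * √(p₂ / (p₂ - 1))) * weakLpNorm σ θ volume *
        (eLpNorm f (ENNReal.ofReal p₁) * eLpNorm φ (ENNReal.ofReal p₂)) := by
  obtain ⟨a, ha⟩ : ∃ a, a * θ = 1 / p₁ - 1 / 2 := ⟨_, div_mul_cancel₀ _ hθ.ne'⟩
  obtain ⟨b, hb⟩ : ∃ b, b * θ = 1 / p₂ - 1 / 2 := ⟨_, div_mul_cancel₀ _ hθ.ne'⟩
  have hnonneg {c p : ℝ} (hc : c * θ = 1 / p - 1 / 2) (hp : 1 < p) (hp2 : p ≤ 2) : 0 ≤ c := by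
    refine nonneg_of_mul_nonneg_left ?_ hθ
    rw [hc, sub_nonneg]
    exact one_div_le_one_div_of_le (by linarith) hp2
  have ha0 : 0 ≤ a := hnonneg ha hp₁ hp₁_le
  have hb0 : 0 ≤ b := hnonneg hb hp₂ hp₂_le
  have hab : a + b = 1 := mul_right_cancel₀ hθ.ne' (by linarith)
  have hmeas {c : ℝ} {g : V → H} (hg : Integrable g) :
      AEStronglyMeasurable (fun ξ => ‖σ ξ‖ ^ c • 𝓕 g ξ) :=
    (hσ.norm.aemeasurable.pow_const c).aestronglyMeasurable.smul
      (continuous_fourier_of_integrable hg).aestronglyMeasurable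
  have hpow : weakLpNorm σ θ volume ^ a * weakLpNorm σ θ volume ^ b = weakLpNorm σ θ volume := by
    rw [← ENNReal.rpow_add_of_nonneg _ _ ha0 hb0, hab, ENNReal.rpow_one]
  simp only [← enorm_norm_rpow_smul_mul_enorm_norm_rpow_smul ha0 hb0 hab (σ _)]
  refine (lintegral_enorm_mul_enorm_le (hmeas hf) (hmeas hφ)).trans ?_
  refine (mul_le_mul' (eLpNorm_norm_rpow_smul_fourier_le hp₁ hp₁_le hθ ha hσ hf)
    (eLpNorm_norm_rpow_smul_fourier_le hp₂ hp₂_le hθ hb hσ hφ)).trans_eq ?_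
  rw [mul_mul_mul_comm, mul_mul_mul_comm (_ ^ a), hpow, ← ENNReal.ofReal_mul (Real.sqrt_nonneg _),
    mul_assoc]

theorem eLpNorm_fourierInv_smul_fourier_le_of_lt {p q : ℝ} (hp : 1 < p) (hp2 : p ≤ 2) (h2q : 2 ≤ q)
    (hpq : p < q) {σ : V → ℂ} (hσ : AEStronglyMeasurable σ) {f : V → H} (hf : Integrable f)
    (hσf : Integrable fun ξ => σ ξ • 𝓕 f ξ) :
    eLpNorm (𝓕⁻ fun ξ => σ ξ • 𝓕 f ξ) (ENNReal.ofReal q) ≤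
      ENNReal.ofReal (√(p / (p - 1)) * √q) * weakLpNorm σ (1 / p - 1 / q) volume *
        eLpNorm f (ENNReal.ofReal p) := by
  have hqq' : q.HolderConjugate q.conjExponent := .conjExponent (by linarith)
  have hq'_le : q.conjExponent ≤ 2 := by
    refine (div_le_iff₀ hqq'.sub_one_pos).2 ?_
    linarith
  have hθ : 0 < 1 / p - 1 / q := sub_pos.2 (one_div_lt_one_div_of_lt (by linarith) hpq)
  have hθq : 1 / p - 1 / q = 1 / p + 1 / q.conjExponent - 1 := by
    linear_combination -hqq'.one_div_add_one_div
  refine eLpNorm_le_of_forall_enorm_integral_inner_le (𝕜 := ℂ) hqq' (memLp_top_fourierInv hσf)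
    fun φ hφ => ?_
  have hinner (ξ : V) :
      ‖inner ℂ (𝓕 φ ξ) (σ ξ • 𝓕 f ξ)‖ₑ ≤ ‖σ ξ‖ₑ * (‖𝓕 f ξ‖ₑ * ‖𝓕 φ ξ‖ₑ) := by
    have h := ENNReal.coe_le_coe.2 (nnnorm_inner_le_nnnorm (𝕜 := ℂ) (𝓕 φ ξ) (σ ξ • 𝓕 f ξ))
    refine h.trans_eq ?_
    rw [ENNReal.coe_mul, ← enorm_eq_nnnorm, ← enorm_eq_nnnorm, enorm_smul]
    ring
  have hbilin := lintegral_enorm_mul_enorm_fourier_mul_enorm_fourier_le hp hp2 hqq'.symm.lt hq'_le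
    hθ hθq hσ hf hφ
  rw [← hqq'.symm.conjugate_eq, ← mul_assoc] at hbilin
  rw [← integral_inner_fourier_eq hφ hσf]
  exact ((enorm_integral_le_lintegral_enorm _).trans (lintegral_mono hinner)).trans hbilin

theorem stmt_7_general {p q : ℝ} (hp : 1 < p) (hp2 : p ≤ 2) (h2q : 2 ≤ q) {σ : V → ℂ}
    (hσ : AEStronglyMeasurable σ) {f : V → H} (hf : Integrable f)
    (hσf : Integrable fun ξ => σ ξ • 𝓕 f ξ) :
    eLpNorm (𝓕⁻ fun ξ => σ ξ • 𝓕 f ξ) (ENNReal.ofReal q) ≤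
      ENNReal.ofReal (√(p / (p - 1)) * √q) * weakLpNorm σ (1 / p - 1 / q) volume *
        eLpNorm f (ENNReal.ofReal p) := by
  rcases (hp2.trans h2q).lt_or_eq with hpq | rfl
  · exact eLpNorm_fourierInv_smul_fourier_le_of_lt hp hp2 h2q hpq hσ hf hσf
  rcases eq_or_ne (eLpNorm f (ENNReal.ofReal p)) 0 with hf0 | hf0
  · have hzero : f =ᵐ[volume] 0 :=
      (eLpNorm_eq_zero_iff hf.1 (by simpa using zero_lt_one.trans hp)).1 hf0
    have hinv : 𝓕⁻ (fun _ : V => (0 : H)) = 0 := by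
      ext x
      simp [Real.fourierInv_eq]
    simp [fourier_eq_zero_of_ae_eq_zero hzero, hinv]
  · have hconst : 0 < √(p / (p - 1)) * √p := by
      have : 0 < p - 1 := sub_pos.2 hp
      positivity
    rw [sub_self, weakLpNorm_zero_right, ENNReal.mul_top (ENNReal.ofReal_pos.2 hconst).ne',
      ENNReal.top_mul hf0]
    exact le_top

end Fourier

/-- Hörmander's `L^p`-`L^q` Fourier multiplier theorem on `ℝⁿ`:
for `1 < p ≤ 2 ≤ q < ∞` there is a constant `K` (depending only on `p, q, n`) such that
for every measurable symbol `σ` the Fourier multiplier `A`, defined on Schwartz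
functions by `(A f)^ = σ · f̂`, satisfies
`‖A f‖_{L^q} ≤ K · sup_{s>0} s |{ξ : |σ ξ| ≥ s}|^{1/p-1/q} · ‖f‖_{L^p}`
(here `q < ∞` since `q` is a real number). -/
theorem stmt_7 (n : ℕ) (p q : ℝ) (hp : 1 < p) (hp2 : p ≤ 2) (h2q : 2 ≤ q) :
    ∃ K : ℝ≥0∞, 0 < K ∧ K ≠ ⊤ ∧
      ∀ σ : EuclideanSpace ℝ (Fin n) → ℂ, Measurable σ →
        ∀ f : 𝓢(EuclideanSpace ℝ (Fin n), ℂ),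
          eLpNorm (𝓕⁻ fun ξ => σ ξ * 𝓕 (⇑f) ξ) (ENNReal.ofReal q) volume ≤
            K * (⨆ s ∈ Ioi (0:ℝ), ENNReal.ofReal s *
                  (volume {ξ : EuclideanSpace ℝ (Fin n) | s ≤ ‖σ ξ‖}) ^ (1/p - 1/q)) *
              eLpNorm (⇑f) (ENNReal.ofReal p) volume := by
  have hconst : 0 < √(p / (p - 1)) * √q := by
    have : 0 < p - 1 := sub_pos.2 hp
    positivity
  refine ⟨_, ENNReal.ofReal_pos.2 hconst, ENNReal.ofReal_ne_top, fun σ hσ f => ?_⟩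
  by_cases hσf : Integrable fun ξ => σ ξ * 𝓕 (⇑f) ξ
  · exact stmt_7_general hp hp2 h2q hσ.aestronglyMeasurable f.integrable hσf
  · simp [fourierInv_eq_zero_of_not_integrable hσf]
end

section
/- Paley's inequality on ℝⁿ: Let 1 < p ≤ 2 and let φ : ℝⁿ → [0,∞) be measurable with M_φ := sup_{t>0} t · |{ξ ∈ ℝⁿ : φ(ξ) ≥ t}| < ∞. Then for all u ∈ L^p(ℝⁿ), ( ∫_{ℝⁿ} |û(ξ)|^p φ(ξ)^{2−p} dξ )^{1/p} ≲ M_φ^{(2−p)/p} ‖u‖_{L^p(ℝⁿ)}. -/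
open MeasureTheory Set SchwartzMap
open scoped ENNReal FourierTransform

/-!
After replacing `φ` by `φ / M_φ`, consider the map `T : u ↦ |û| / φ` into `L^p(φ² dξ)`. Since
`∫ |Tu|^p φ² = ∫ |û|^p φ^{2-p}`, Paley's inequality says that `T` is bounded on `L^p`. At `p = 2`
this is Plancherel. At `p = 1` there is a weak-type bound: `|û| ≤ ‖u‖₁` gives
`{Tu > t} ⊆ {φ < ‖u‖₁ / t}`, whose `φ² dξ`-measure is at most `2 ‖u‖₁ / t` because the weak `L¹`
bound on `φ` yields `∫_{φ ≤ s} φ² ≤ 2 s`. Marcinkiewicz interpolation, splitting `u` at height `t`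
into an `L¹` and an `L²` part, gives the range `1 < p < 2`.
-/

section PowerIntegrals

variable {s c : ℝ}

theorem lintegral_Ioo_rpow (hs : -1 < s) (hc : 0 ≤ c) :
    ∫⁻ t in Ioo 0 c, ENNReal.ofReal (t ^ s) = ENNReal.ofReal (c ^ (s + 1) / (s + 1)) := by
  have hint : IntegrableOn (fun t : ℝ ↦ t ^ s) (Ioc 0 c) :=
    (intervalIntegrable_iff_integrableOn_Ioc_of_le hc).1
      (intervalIntegral.intervalIntegrable_rpow' hs)
  have hnonneg : 0 ≤ᵐ[volume.restrict (Ioc 0 c)] fun t : ℝ ↦ t ^ s := by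
    filter_upwards [self_mem_ae_restrict measurableSet_Ioc] with t ht
    exact Real.rpow_nonneg ht.1.le s
  rw [setLIntegral_congr Ioo_ae_eq_Ioc, ← ofReal_integral_eq_lintegral_ofReal hint hnonneg,
    ← intervalIntegral.integral_of_le hc, integral_rpow (.inl hs),
    Real.zero_rpow (by linarith), sub_zero]

theorem lintegral_Ici_rpow (hs : s < -1) (hc : 0 < c) :
    ∫⁻ t in Ici c, ENNReal.ofReal (t ^ s) = ENNReal.ofReal (-c ^ (s + 1) / (s + 1)) := by
  have hnonneg : 0 ≤ᵐ[volume.restrict (Ioi c)] fun t : ℝ ↦ t ^ s := by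
    filter_upwards [self_mem_ae_restrict measurableSet_Ioi] with t ht
    exact Real.rpow_nonneg (hc.trans ht).le s
  rw [← setLIntegral_congr Ioi_ae_eq_Ici,
    ← ofReal_integral_eq_lintegral_ofReal (integrableOn_Ioi_rpow_of_lt hs hc) hnonneg,
    integral_Ioi_rpow_of_lt hs hc]

end PowerIntegrals

section Interpolation

variable {α : Type*} [MeasurableSpace α] {μ : Measure α}

theorem lintegral_mul_setLIntegral_preimage_swap {X Y : Type*} [MeasurableSpace X]
    [MeasurableSpace Y] {ρ : Measure X} [SFinite ρ] [SFinite μ] {D : Set (X × Y)}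
    (hD : MeasurableSet D) {g : α → Y} (hg : AEMeasurable g μ) {k : X → ℝ≥0∞}
    (hk : Measurable k) {F : α → ℝ≥0∞} (hF : AEMeasurable F μ) :
    ∫⁻ t, k t * ∫⁻ x in {x | (t, g x) ∈ D}, F x ∂μ ∂ρ =
      ∫⁻ x, (∫⁻ t in {t | (t, g x) ∈ D}, k t ∂ρ) * F x ∂μ := by
  have hind : Measurable (D.indicator (1 : X × Y → ℝ≥0∞)) := measurable_one.indicator hD
  have hpair : AEMeasurable (fun z : X × α ↦ (z.1, g z.2)) (ρ.prod μ) :=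
    measurable_fst.aemeasurable.prodMk hg.comp_snd
  have hsection (t : X) : NullMeasurableSet {x | (t, g x) ∈ D} μ :=
    (measurable_const.aemeasurable.prodMk hg).nullMeasurable hD
  calc
    _ = ∫⁻ t, ∫⁻ x, k t * (D.indicator 1 (t, g x) * F x) ∂μ ∂ρ := by
      refine lintegral_congr fun t ↦ ?_
      have hmeas : AEMeasurable (fun x ↦ D.indicator 1 (t, g x) * F x) μ :=
        (hind.comp_aemeasurable (measurable_const.aemeasurable.prodMk hg)).mul hF
      rw [lintegral_const_mul'' _ hmeas, ← lintegral_indicator₀ (hsection t)]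
      congr 2 with x
      by_cases h : (t, g x) ∈ D <;> simp [h]
    _ = ∫⁻ x, ∫⁻ t, k t * (D.indicator 1 (t, g x) * F x) ∂ρ ∂μ :=
      lintegral_lintegral_swap ((hk.comp measurable_fst).aemeasurable.mul
        ((hind.comp_aemeasurable hpair).mul hF.comp_snd))
    _ = _ := by
      refine lintegral_congr fun x ↦ ?_
      have hmeas : MeasurableSet {t | (t, g x) ∈ D} := measurable_prodMk_right hD
      rw [← lintegral_mul_const _ hk, ← lintegral_indicator hmeas]
      congr 1 with t
      by_cases h : (t, g x) ∈ D <;> simp [h]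

variable [SFinite μ] {g : α → ℝ} {p q r : ℝ}

theorem lintegral_Ioi_rpow_mul_setLIntegral_lt (hg : AEMeasurable g μ) (hg0 : ∀ x, 0 ≤ g x)
    (hp : 0 < p) (hqp : q < p) :
    ∫⁻ t in Ioi (0 : ℝ), ENNReal.ofReal (t ^ (p - q - 1)) *
        ∫⁻ x in {x | t < g x}, ENNReal.ofReal (g x ^ q) ∂μ =
      ENNReal.ofReal (1 / (p - q)) * ∫⁻ x, ENNReal.ofReal (g x ^ p) ∂μ := by
  have hpq : 0 < p - q := sub_pos.2 hqp
  calc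
    _ = ∫⁻ x, (∫⁻ t in Iio (g x), ENNReal.ofReal (t ^ (p - q - 1)) ∂volume.restrict (Ioi 0)) *
        ENNReal.ofReal (g x ^ q) ∂μ :=
      lintegral_mul_setLIntegral_preimage_swap (D := {z : ℝ × ℝ | z.1 < z.2})
        (measurableSet_lt measurable_fst measurable_snd) hg (by fun_prop) (by fun_prop)
    _ = ∫⁻ x, ENNReal.ofReal (1 / (p - q)) * ENNReal.ofReal (g x ^ p) ∂μ := by
      refine lintegral_congr fun x ↦ ?_
      rw [Measure.restrict_restrict measurableSet_Iio, inter_comm, Ioi_inter_Iio,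
        lintegral_Ioo_rpow (by linarith) (hg0 x), sub_add_cancel,
        ← ENNReal.ofReal_mul (div_nonneg (Real.rpow_nonneg (hg0 x) _) hpq.le),
        ← ENNReal.ofReal_mul (by positivity), div_mul_eq_mul_div,
        ← Real.rpow_add' (hg0 x) (by linarith), sub_add_cancel, one_div_mul_eq_div]
    _ = _ := lintegral_const_mul'' _ (by fun_prop)

theorem lintegral_Ioi_rpow_mul_setLIntegral_le (hg : AEMeasurable g μ) (hg0 : ∀ x, 0 ≤ g x)
    (hp : 0 < p) (hpr : p < r) :
    ∫⁻ t in Ioi (0 : ℝ), ENNReal.ofReal (t ^ (p - r - 1)) *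
        ∫⁻ x in {x | g x ≤ t}, ENNReal.ofReal (g x ^ r) ∂μ =
      ENNReal.ofReal (1 / (r - p)) * ∫⁻ x, ENNReal.ofReal (g x ^ p) ∂μ := by
  have : 0 < r - p := sub_pos.2 hpr
  calc
    _ = ∫⁻ x, (∫⁻ t in Ici (g x), ENNReal.ofReal (t ^ (p - r - 1)) ∂volume.restrict (Ioi 0)) *
        ENNReal.ofReal (g x ^ r) ∂μ :=
      lintegral_mul_setLIntegral_preimage_swap (D := {z : ℝ × ℝ | z.2 ≤ z.1})
        (measurableSet_le measurable_snd measurable_fst) hg (by fun_prop) (by fun_prop)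
    _ = ∫⁻ x, ENNReal.ofReal (1 / (r - p)) * ENNReal.ofReal (g x ^ p) ∂μ := by
      refine lintegral_congr fun x ↦ ?_
      rcases (hg0 x).eq_or_lt with hx | hx
      · simp [← hx, hp.ne', (hp.trans hpr).ne']
      rw [Measure.restrict_restrict measurableSet_Ici, inter_eq_left.2 (Ici_subset_Ioi.2 hx),
        lintegral_Ici_rpow (by linarith) hx, sub_add_cancel, ← neg_sub r p, neg_div_neg_eq,
        ← ENNReal.ofReal_mul (by positivity), ← ENNReal.ofReal_mul (by positivity),
        div_mul_eq_mul_div, ← Real.rpow_add hx, neg_sub, sub_add_cancel, one_div_mul_eq_div]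
    _ = _ := lintegral_const_mul'' _ (by fun_prop)

theorem lintegral_rpow_le_of_meas_lt_le_truncated {β : Type*} [MeasurableSpace β]
    {ν : Measure β} {h : β → ℝ} (hh : AEMeasurable h ν) (hh0 : ∀ ξ, 0 ≤ h ξ)
    (hg : AEMeasurable g μ) (hg0 : ∀ x, 0 ≤ g x) (hp : 0 < p) (hqp : q < p) (hpr : p < r)
    {a b : ℝ≥0∞}
    (hdist : ∀ t : ℝ, 0 < t → ν {ξ | t < h ξ} ≤
      a * ENNReal.ofReal (t ^ (-q)) * ∫⁻ x in {x | t < g x}, ENNReal.ofReal (g x ^ q) ∂μ +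
      b * ENNReal.ofReal (t ^ (-r)) * ∫⁻ x in {x | g x ≤ t}, ENNReal.ofReal (g x ^ r) ∂μ) :
    ∫⁻ ξ, ENNReal.ofReal (h ξ ^ p) ∂ν ≤
      ENNReal.ofReal p * (a * ENNReal.ofReal (1 / (p - q)) + b * ENNReal.ofReal (1 / (r - p))) *
        ∫⁻ x, ENNReal.ofReal (g x ^ p) ∂μ := by
  have rpow_mul_weight {t : ℝ} (ht : 0 < t) (e : ℝ) :
      ENNReal.ofReal (t ^ (-e)) * ENNReal.ofReal (t ^ (p - 1)) =
        ENNReal.ofReal (t ^ (p - e - 1)) := by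
    rw [← ENNReal.ofReal_mul (by positivity), ← Real.rpow_add ht]
    ring_nf
  have measurable_lt : Measurable fun t : ℝ ↦ ∫⁻ x in {x | t < g x}, ENNReal.ofReal (g x ^ q) ∂μ :=
    Antitone.measurable fun s t hst ↦ lintegral_mono_set fun x hx ↦ hst.trans_lt hx
  have measurable_le : Measurable fun t : ℝ ↦ ∫⁻ x in {x | g x ≤ t}, ENNReal.ofReal (g x ^ r) ∂μ :=
    Monotone.measurable fun s t hst ↦ lintegral_mono_set fun x hx ↦ le_trans hx hst
  rw [lintegral_rpow_eq_lintegral_meas_lt_mul ν (.of_forall hh0) hh hp, mul_assoc, add_mul,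
    mul_assoc a, mul_assoc b, ← lintegral_Ioi_rpow_mul_setLIntegral_lt hg hg0 hp hqp,
    ← lintegral_Ioi_rpow_mul_setLIntegral_le hg hg0 hp hpr]
  gcongr ENNReal.ofReal p * ?_
  rw [← lintegral_const_mul _ (by fun_prop), ← lintegral_const_mul _ (by fun_prop),
    ← lintegral_add_left (by fun_prop)]
  refine setLIntegral_mono' measurableSet_Ioi fun t ht ↦ ?_
  rw [← rpow_mul_weight ht, ← rpow_mul_weight ht]
  calc
    _ ≤ _ * ENNReal.ofReal (t ^ (p - 1)) := mul_le_mul_left (hdist t ht) _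
    _ = _ := by ring

end Interpolation

section WeakL1

variable {α : Type*} [MeasurableSpace α] {μ : Measure α} {φ : α → ℝ} {M : ℝ≥0∞}

theorem setLIntegral_rpow_le_of_mul_meas_le (hφ : AEMeasurable φ μ) (hφ0 : ∀ ξ, 0 ≤ φ ξ)
    (hM : ∀ t : ℝ, 0 < t → ENNReal.ofReal t * μ {ξ | t ≤ φ ξ} ≤ M) {r s : ℝ} (hr : 1 < r)
    (hs : 0 ≤ s) :
    ∫⁻ ξ in {ξ | φ ξ ≤ s}, ENNReal.ofReal (φ ξ ^ r) ∂μ ≤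
      ENNReal.ofReal (r / (r - 1) * s ^ (r - 1)) * M := by
  have hφs : NullMeasurableSet {ξ | φ ξ ≤ s} μ := nullMeasurableSet_le hφ aemeasurable_const
  have hdist {t : ℝ} (ht : 0 < t) :
      μ.restrict {ξ | φ ξ ≤ s} {ξ | t ≤ φ ξ} * ENNReal.ofReal (t ^ (r - 1)) ≤
        (Iic s).indicator (fun t ↦ ENNReal.ofReal (t ^ (r - 2)) * M) t := by
    rw [Measure.restrict_apply₀' hφs]
    by_cases hts : t ≤ s
    · have hpow : t ^ (r - 1) = t ^ (r - 2) * t := by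
        rw [← Real.rpow_add_one ht.ne']
        ring_nf
      rw [indicator_of_mem (mem_Iic.2 hts), hpow, ENNReal.ofReal_mul (by positivity),
        mul_left_comm, mul_comm (μ _)]
      gcongr
      exact (mul_le_mul_right (measure_mono inter_subset_left) _).trans (hM t ht)
    · have hempty : {ξ | t ≤ φ ξ} ∩ {ξ | φ ξ ≤ s} = ∅ :=
        eq_empty_of_forall_notMem fun ξ hξ ↦ hts (hξ.1.trans hξ.2)
      simp [hempty]
  calc
    _ = ENNReal.ofReal r * ∫⁻ t in Ioi 0,
          μ.restrict {ξ | φ ξ ≤ s} {ξ | t ≤ φ ξ} * ENNReal.ofReal (t ^ (r - 1)) :=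
      lintegral_rpow_eq_lintegral_meas_le_mul _ (.of_forall hφ0) hφ.restrict (by linarith)
    _ ≤ ENNReal.ofReal r * ∫⁻ t in Ioi 0,
          (Iic s).indicator (fun t ↦ ENNReal.ofReal (t ^ (r - 2)) * M) t := by
      gcongr ENNReal.ofReal r * ?_
      exact setLIntegral_mono' measurableSet_Ioi fun t ht ↦ hdist ht
    _ = ENNReal.ofReal r * (ENNReal.ofReal (s ^ (r - 1) / (r - 1)) * M) := by
      rw [setLIntegral_indicator measurableSet_Iic, inter_comm, Ioi_inter_Iic,
        lintegral_mul_const _ (by fun_prop), ← setLIntegral_congr Ioo_ae_eq_Ioc,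
        lintegral_Ioo_rpow (by linarith) hs]
      ring_nf
    _ = _ := by
      rw [← mul_assoc, ← ENNReal.ofReal_mul (by linarith), div_mul_eq_mul_div, mul_div_assoc]

theorem withDensity_sq_lt_div_le [SFinite μ] (hφ : AEMeasurable φ μ) (hφ0 : ∀ ξ, 0 ≤ φ ξ)
    (hM : ∀ t : ℝ, 0 < t → ENNReal.ofReal t * μ {ξ | t ≤ φ ξ} ≤ M) {h k : α → ℝ} {A t : ℝ}
    (hk : AEMeasurable k μ) (hA : 0 ≤ A) (ht : 0 < t) (hhk : ∀ᵐ ξ ∂μ, h ξ ≤ A + k ξ) :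
    μ.withDensity (fun ξ ↦ ENNReal.ofReal (φ ξ ^ (2 : ℝ))) {ξ | t < h ξ / φ ξ} ≤
      ENNReal.ofReal (4 * A / t) * M +
        ENNReal.ofReal (4 / t ^ 2) * ∫⁻ ξ, ENNReal.ofReal (k ξ ^ (2 : ℝ)) ∂μ := by
  set ν := μ.withDensity fun ξ ↦ ENNReal.ofReal (φ ξ ^ (2 : ℝ))
  have hcover : {ξ | t < h ξ / φ ξ} ≤ᵐ[ν]
      ({ξ | φ ξ ≤ 2 * A / t} ∪ {ξ | φ ξ ≤ 2 * k ξ / t} : Set α) := by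
    filter_upwards [withDensity_absolutelyContinuous μ _ hhk] with ξ hξ (hlt : t < h ξ / φ ξ)
    have hφpos : 0 < φ ξ :=
      (hφ0 ξ).lt_of_ne fun h0 ↦ by simp only [← h0, div_zero, ht.not_gt] at hlt
    have hlt' : t * φ ξ < h ξ := (lt_div_iff₀ hφpos).1 hlt
    change φ ξ ≤ 2 * A / t ∨ φ ξ ≤ 2 * k ξ / t
    by_contra! hcon
    rw [div_lt_iff₀' ht, div_lt_iff₀' ht] at hcon
    linarith
  have hsmall : ν {ξ | φ ξ ≤ 2 * A / t} ≤ ENNReal.ofReal (4 * A / t) * M := by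
    have hconst : 2 / (2 - 1) * (2 * A / t) ^ (2 - 1 : ℝ) = 4 * A / t := by
      norm_num
      ring
    rw [withDensity_apply', ← hconst]
    exact setLIntegral_rpow_le_of_mul_meas_le hφ hφ0 hM one_lt_two (by positivity)
  have hlarge : ν {ξ | φ ξ ≤ 2 * k ξ / t} ≤
      ENNReal.ofReal (4 / t ^ 2) * ∫⁻ ξ, ENNReal.ofReal (k ξ ^ (2 : ℝ)) ∂μ := by
    rw [withDensity_apply', ← lintegral_const_mul'' _ (by fun_prop)]
    refine (lintegral_mono_ae ?_).trans (setLIntegral_le_lintegral _ _)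
    filter_upwards [ae_restrict_mem₀ (nullMeasurableSet_le hφ (by fun_prop))] with ξ hξ
    rw [← ENNReal.ofReal_mul (by positivity), Real.rpow_two, Real.rpow_two]
    refine ENNReal.ofReal_le_ofReal ?_
    calc
      φ ξ ^ 2 ≤ (2 * k ξ / t) ^ 2 := pow_le_pow_left₀ (hφ0 ξ) hξ 2
      _ = 4 / t ^ 2 * k ξ ^ 2 := by ring
  calc
    _ ≤ ν ({ξ | φ ξ ≤ 2 * A / t} ∪ {ξ | φ ξ ≤ 2 * k ξ / t}) := measure_mono_ae hcover
    _ ≤ _ := (measure_union_le _ _).trans (add_le_add hsmall hlarge)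

end WeakL1

section FourierTransform

open scoped ContDiff

variable {V E : Type*} [NormedAddCommGroup V] [InnerProductSpace ℝ V] [FiniteDimensional ℝ V]
  [MeasurableSpace V] [BorelSpace V] [NormedAddCommGroup E] [InnerProductSpace ℂ E]

/-- `g` is the Fourier transform of `f` in the sense of distributions. This gives a meaning to `û`
for `u` in `L^p` with `1 < p ≤ 2`, where the integral defining `𝓕 u` need not converge. Test
functions have compact support so that every locally integrable `g` can be paired with them, and
integrability on the side of `f` is required so that neither integral takes its junk value. -/
structure IsFourierTransform (f g : V → E) : Prop where
  locallyIntegrable : LocallyIntegrable g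
  integrable_fourier_smul (ψ : 𝓢(V, ℂ)) (hψ : HasCompactSupport ψ) :
    Integrable fun x ↦ 𝓕 ψ x • f x
  integral_fourier_smul (ψ : 𝓢(V, ℂ)) (hψ : HasCompactSupport ψ) :
    ∫ x, 𝓕 ψ x • f x = ∫ ξ, ψ ξ • g ξ

theorem integrable_schwartz_smul {f : V → E} {q : ℝ≥0∞} (hq : 1 ≤ q)
    (hf : MemLp f q) (ψ : 𝓢(V, ℂ)) :
    Integrable fun x ↦ ψ x • f x := by
  have := ENNReal.HolderConjugate.conjExponent hq
  rw [← memLp_one_iff_integrable]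
  exact hf.smul (ψ.memLp q.conjExponent)

namespace IsFourierTransform

variable {f f₁ f₂ g g₁ g₂ : V → E}

theorem integrable_smul (h : IsFourierTransform f g) {ψ : 𝓢(V, ℂ)} (hψ : HasCompactSupport ψ) :
    Integrable fun ξ ↦ ψ ξ • g ξ :=
  h.locallyIntegrable.integrable_smul_left_of_hasCompactSupport ψ.continuous hψ

theorem add (h₁ : IsFourierTransform f₁ g₁) (h₂ : IsFourierTransform f₂ g₂) :
    IsFourierTransform (f₁ + f₂) (g₁ + g₂) where
  locallyIntegrable := h₁.locallyIntegrable.add h₂.locallyIntegrable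
  integrable_fourier_smul ψ hψ := by
    simp only [Pi.add_apply, smul_add]
    exact (h₁.integrable_fourier_smul ψ hψ).add (h₂.integrable_fourier_smul ψ hψ)
  integral_fourier_smul ψ hψ := by
    simp only [Pi.add_apply, smul_add]
    rw [integral_add (h₁.integrable_fourier_smul ψ hψ) (h₂.integrable_fourier_smul ψ hψ),
      integral_add (h₁.integrable_smul hψ) (h₂.integrable_smul hψ),
      h₁.integral_fourier_smul ψ hψ, h₂.integral_fourier_smul ψ hψ]

theorem congr_left (h : IsFourierTransform f₁ g) (hf : f₁ =ᵐ[volume] f₂) :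
    IsFourierTransform f₂ g where
  locallyIntegrable := h.locallyIntegrable
  integrable_fourier_smul ψ hψ :=
    (h.integrable_fourier_smul ψ hψ).congr (hf.mono fun x hx ↦ by simp only [hx])
  integral_fourier_smul ψ hψ := by
    rw [← h.integral_fourier_smul ψ hψ]
    exact integral_congr_ae (hf.mono fun x hx ↦ by simp only [hx])

variable [CompleteSpace E]

theorem ae_unique (h₁ : IsFourierTransform f g₁) (h₂ : IsFourierTransform f g₂) :
    g₁ =ᵐ[volume] g₂ := by
  refine ae_eq_of_integral_contDiff_smul_eq h₁.locallyIntegrable h₂.locallyIntegrable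
    fun ψ hψ hsupp ↦ ?_
  have hsupp' : HasCompactSupport (Complex.ofRealCLM ∘ ψ) := hsupp.comp_left rfl
  have hψ' : ContDiff ℝ ∞ (Complex.ofRealCLM ∘ ψ) := by fun_prop
  have key := (h₁.integral_fourier_smul (hsupp'.toSchwartzMap hψ') hsupp').symm.trans
    (h₂.integral_fourier_smul _ hsupp')
  simpa using key

theorem of_integrable {f : V → E} (hf : Integrable f) :
    IsFourierTransform f (𝓕 f) where
  locallyIntegrable := (VectorFourier.fourierIntegral_continuous Real.continuous_fourierChar
    continuous_inner hf).locallyIntegrable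
  integrable_fourier_smul ψ _ :=
    integrable_schwartz_smul le_rfl (memLp_one_iff_integrable.2 hf) (𝓕 ψ)
  integral_fourier_smul ψ _ := by
    have := VectorFourier.integral_fourierIntegral_smul_eq_flip (L := innerₗ V)
      Real.continuous_fourierChar continuous_inner (ψ.integrable (μ := volume)) hf
    simpa using! this

theorem of_Lp_two (f : Lp E 2 (volume : Measure V)) :
    IsFourierTransform f (𝓕 f : Lp E 2 (volume : Measure V)) where
  locallyIntegrable := (Lp.memLp _).locallyIntegrable one_le_two
  integrable_fourier_smul ψ _ :=
    integrable_schwartz_smul one_le_two (Lp.memLp f) (𝓕 ψ)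
  integral_fourier_smul ψ _ := by
    have h := congr($(Lp.fourier_toTemperedDistribution_eq f) ψ)
    simpa using h

end IsFourierTransform

end FourierTransform

section Truncation

variable {α E : Type*} [MeasurableSpace α] {μ : Measure α} [NormedAddCommGroup E] {u : α → E}
  {p q r t : ℝ}

theorem memLp_of_norm_rpow_le {F : Type*} [NormedAddCommGroup F] {v : α → F} (hp : 0 < p)
    (hq : 0 < q) (hu : MemLp u (ENNReal.ofReal p) μ) (hv : AEStronglyMeasurable v μ) {C : ℝ}
    (h : ∀ x, ‖v x‖ ^ q ≤ C * ‖u x‖ ^ p) : MemLp v (ENNReal.ofReal q) μ := by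
  have hupow : Integrable (fun x ↦ C * ‖u x‖ ^ p) μ := by
    simpa only [ENNReal.toReal_ofReal hp.le] using
      (hu.integrable_norm_rpow (by simpa using hp) ENNReal.ofReal_ne_top).const_mul C
  rw [← integrable_norm_rpow_iff hv (by simpa using hq) ENNReal.ofReal_ne_top,
    ENNReal.toReal_ofReal hq.le]
  refine hupow.mono' (hv.norm.aemeasurable.pow_const q).aestronglyMeasurable (.of_forall fun x ↦ ?_)
  rw [Real.norm_of_nonneg (by positivity)]
  exact h x

theorem nullMeasurableSet_norm_le (hu : AEStronglyMeasurable u μ) (t : ℝ) :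
    NullMeasurableSet {x | ‖u x‖ ≤ t} μ :=
  nullMeasurableSet_le hu.norm.aemeasurable aemeasurable_const

theorem nullMeasurableSet_lt_norm (hu : AEStronglyMeasurable u μ) (t : ℝ) :
    NullMeasurableSet {x | t < ‖u x‖} μ :=
  nullMeasurableSet_lt aemeasurable_const hu.norm.aemeasurable

theorem memLp_indicator_norm_le (hu : MemLp u (ENNReal.ofReal p) μ) (hp : 0 < p) (hpr : p ≤ r)
    (ht : 0 < t) : MemLp ({x | ‖u x‖ ≤ t}.indicator u) (ENNReal.ofReal r) μ := by
  have hr : 0 < r := hp.trans_le hpr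
  refine memLp_of_norm_rpow_le (C := t ^ (r - p)) hp hr hu
    (hu.1.indicator₀ (nullMeasurableSet_norm_le hu.1 t)) fun x ↦ ?_
  by_cases hx : ‖u x‖ ≤ t
  · rw [indicator_of_mem (s := {x | ‖u x‖ ≤ t}) hx, ← sub_add_cancel r p,
      Real.rpow_add_of_nonneg (norm_nonneg _) (sub_nonneg.2 hpr) hp.le, add_sub_cancel_right]
    gcongr
  · rw [indicator_of_notMem (s := {x | ‖u x‖ ≤ t}) hx, norm_zero, Real.zero_rpow hr.ne']
    positivity

theorem memLp_indicator_lt_norm (hu : MemLp u (ENNReal.ofReal p) μ) (hq : 0 < q) (hqp : q ≤ p)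
    (ht : 0 < t) : MemLp ({x | t < ‖u x‖}.indicator u) (ENNReal.ofReal q) μ := by
  refine memLp_of_norm_rpow_le (C := t ^ (q - p)) (hq.trans_le hqp) hq hu
    (hu.1.indicator₀ (nullMeasurableSet_lt_norm hu.1 t)) fun x ↦ ?_
  by_cases hx : t < ‖u x‖
  · rw [indicator_of_mem (s := {x | t < ‖u x‖}) hx, ← sub_add_cancel q p,
      Real.rpow_add (ht.trans hx), add_sub_cancel_right]
    gcongr ?_ * _
    exact Real.rpow_le_rpow_of_nonpos ht hx.le (sub_nonpos.2 hqp)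
  · rw [indicator_of_notMem (s := {x | t < ‖u x‖}) hx, norm_zero, Real.zero_rpow hq.ne']
    positivity

theorem integrable_indicator_lt_norm (hu : MemLp u (ENNReal.ofReal p) μ) (hp : 1 ≤ p)
    (ht : 0 < t) : Integrable ({x | t < ‖u x‖}.indicator u) μ := by
  simpa [memLp_one_iff_integrable] using memLp_indicator_lt_norm hu one_pos hp ht

end Truncation

section Splitting

variable {V E : Type*} [NormedAddCommGroup V] [InnerProductSpace ℝ V] [FiniteDimensional ℝ V]
  [MeasurableSpace V] [BorelSpace V] [NormedAddCommGroup E] [InnerProductSpace ℂ E]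
  [CompleteSpace E] {u û : V → E} {p t : ℝ}

theorem IsFourierTransform.eLpNorm_two_eq (hû : IsFourierTransform u û) (hu : MemLp u 2) :
    eLpNorm û 2 volume = eLpNorm u 2 volume := by
  have hae : û =ᵐ[volume] (𝓕 hu.toLp : Lp E 2 (volume : Measure V)) :=
    hû.ae_unique ((of_Lp_two _).congr_left hu.coeFn_toLp)
  rw [eLpNorm_congr_ae hae, ← eLpNorm_congr_ae hu.coeFn_toLp, ← Lp.enorm_def, ← Lp.enorm_def,
    ← ofReal_norm, ← ofReal_norm, Lp.norm_fourier_eq]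

theorem IsFourierTransform.lintegral_enorm_rpow_two (hû : IsFourierTransform u û)
    (hu : MemLp u 2) : ∫⁻ ξ, ‖û ξ‖ₑ ^ (2 : ℝ) = ∫⁻ x, ‖u x‖ₑ ^ (2 : ℝ) := by
  have (f : V → E) : ∫⁻ x, ‖f x‖ₑ ^ (2 : ℝ) = eLpNorm f 2 volume ^ (2 : ℝ) :=
    (eLpNorm_nnreal_pow_eq_lintegral (p := 2) two_ne_zero).symm
  rw [this, this, hû.eLpNorm_two_eq hu]

theorem exists_isFourierTransform_truncation (hu : MemLp u (ENNReal.ofReal p)) (hp : 1 ≤ p)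
    (hp2 : p ≤ 2) (ht : 0 < t) :
    ∃ w : V → E, IsFourierTransform ({x | ‖u x‖ ≤ t}.indicator u) w ∧
      IsFourierTransform u (𝓕 ({x | t < ‖u x‖}.indicator u) + w) := by
  have hlarge : Integrable ({x | t < ‖u x‖}.indicator u) := integrable_indicator_lt_norm hu hp ht
  have hsmall : MemLp ({x | ‖u x‖ ≤ t}.indicator u) 2 := by
    simpa using memLp_indicator_norm_le hu (one_pos.trans_le hp) hp2 ht
  have hsum : {x | t < ‖u x‖}.indicator u + {x | ‖u x‖ ≤ t}.indicator u = u := by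
    simpa [compl_ofPred] using indicator_compl_add_self {x | ‖u x‖ ≤ t} u
  have hw := (IsFourierTransform.of_Lp_two hsmall.toLp).congr_left hsmall.coeFn_toLp
  exact ⟨_, hw, by simpa only [hsum] using (IsFourierTransform.of_integrable hlarge).add hw⟩

theorem IsFourierTransform.exists_ae_norm_le_truncated (hû : IsFourierTransform u û)
    (hu : MemLp u (ENNReal.ofReal p)) (hp : 1 ≤ p) (hp2 : p ≤ 2) (ht : 0 < t) :
    ∃ (A : ℝ) (w : V → E), 0 ≤ A ∧ AEStronglyMeasurable w ∧ (∀ᵐ ξ, ‖û ξ‖ ≤ A + ‖w ξ‖) ∧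
      ENNReal.ofReal A = ∫⁻ x in {x | t < ‖u x‖}, ‖u x‖ₑ ∧
      ∫⁻ ξ, ‖w ξ‖ₑ ^ (2 : ℝ) = ∫⁻ x in {x | ‖u x‖ ≤ t}, ‖u x‖ₑ ^ (2 : ℝ) := by
  set v := {x | t < ‖u x‖}.indicator u
  have hv : Integrable v := integrable_indicator_lt_norm hu hp ht
  have hsmall : MemLp ({x | ‖u x‖ ≤ t}.indicator u) 2 := by
    simpa using memLp_indicator_norm_le hu (one_pos.trans_le hp) hp2 ht
  obtain ⟨w, hw, hsum⟩ := exists_isFourierTransform_truncation hu hp hp2 ht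
  refine ⟨∫ x, ‖v x‖, w, integral_nonneg fun _ ↦ norm_nonneg _,
    hw.locallyIntegrable.aestronglyMeasurable, ?_, ?_, ?_⟩
  · filter_upwards [hû.ae_unique hsum] with ξ hξ
    rw [hξ]
    exact (norm_add_le _ _).trans
      (add_le_add_left (VectorFourier.norm_fourierIntegral_le_integral_norm ..) _)
  · rw [ofReal_integral_norm_eq_lintegral_enorm hv,
      ← lintegral_indicator₀ (nullMeasurableSet_lt_norm hu.1 t)]
    simp only [v, enorm_indicator_eq_indicator_enorm]
  · rw [hw.lintegral_enorm_rpow_two hsmall,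
      ← lintegral_indicator₀ (nullMeasurableSet_norm_le hu.1 t)]
    congr with x
    by_cases hx : ‖u x‖ ≤ t <;> simp [hx]

end Splitting

section Paley

variable {V E : Type*} [NormedAddCommGroup V] [InnerProductSpace ℝ V] [FiniteDimensional ℝ V]
  [MeasurableSpace V] [BorelSpace V] [NormedAddCommGroup E] [InnerProductSpace ℂ E]
  [CompleteSpace E] {u û : V → E} {φ : V → ℝ} {p t : ℝ}

theorem ofReal_norm_rpow {F : Type*} [NormedAddCommGroup F] (x : F) {s : ℝ} (hs : 0 ≤ s) :
    ENNReal.ofReal (‖x‖ ^ s) = ‖x‖ₑ ^ s := by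
  rw [← ENNReal.ofReal_rpow_of_nonneg (norm_nonneg x) hs, ofReal_norm]

theorem withDensity_sq_lt_norm_div_le (hφ : Measurable φ) (hφ0 : ∀ ξ, 0 ≤ φ ξ)
    (hM : ∀ t : ℝ, 0 < t → ENNReal.ofReal t * volume {ξ | t ≤ φ ξ} ≤ 1)
    (hû : IsFourierTransform u û) (hu : MemLp u (ENNReal.ofReal p)) (hp : 1 ≤ p) (hp2 : p ≤ 2)
    (ht : 0 < t) :
    volume.withDensity (fun ξ ↦ ENNReal.ofReal (φ ξ ^ (2 : ℝ))) {ξ | t < ‖û ξ‖ / φ ξ} ≤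
      4 * ENNReal.ofReal (t ^ (-1 : ℝ)) *
          (∫⁻ x in {x | t < ‖u x‖}, ENNReal.ofReal (‖u x‖ ^ (1 : ℝ))) +
        4 * ENNReal.ofReal (t ^ (-2 : ℝ)) *
          ∫⁻ x in {x | ‖u x‖ ≤ t}, ENNReal.ofReal (‖u x‖ ^ (2 : ℝ)) := by
  obtain ⟨A, w, hA0, hw, hûw, hA, hw2⟩ := hû.exists_ae_norm_le_truncated hu hp hp2 ht
  have hdist := withDensity_sq_lt_div_le hφ.aemeasurable hφ0 hM hw.norm.aemeasurable hA0 ht hûw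
  have hfour (s : ℝ) : ENNReal.ofReal (4 * s) = 4 * ENNReal.ofReal s := by
    rw [ENNReal.ofReal_mul (by norm_num), ENNReal.ofReal_ofNat]
  have hlin : ENNReal.ofReal (4 * A / t) =
      4 * ENNReal.ofReal (t ^ (-1 : ℝ)) * ENNReal.ofReal A := by
    rw [Real.rpow_neg_one, ← hfour, ← ENNReal.ofReal_mul (by positivity)]
    ring_nf
  have hquad : ENNReal.ofReal (4 / t ^ 2) = 4 * ENNReal.ofReal (t ^ (-2 : ℝ)) := by
    rw [← hfour, Real.rpow_neg ht.le, Real.rpow_two, div_eq_mul_inv]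
  simpa only [ofReal_norm_rpow _ zero_le_two, ofReal_norm_rpow _ zero_le_one, ENNReal.rpow_one,
    mul_one, hlin, hquad, hA, hw2] using hdist

theorem ofReal_sq_mul_ofReal_div_rpow {a b s : ℝ} (ha : 0 ≤ a) (hb : 0 ≤ b) (hs : s < 2) :
    ENNReal.ofReal (b ^ (2 : ℝ)) * ENNReal.ofReal ((a / b) ^ s) =
      ENNReal.ofReal (a ^ s) * ENNReal.ofReal b ^ (2 - s) := by
  rw [ENNReal.ofReal_rpow_of_nonneg hb (by linarith), ← ENNReal.ofReal_mul (by positivity),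
    ← ENNReal.ofReal_mul (by positivity)]
  congr 1
  rcases hb.eq_or_lt with rfl | hb
  · simp [(sub_pos.2 hs).ne']
  · rw [Real.div_rpow ha hb.le, Real.rpow_sub hb]
    ring

theorem lintegral_enorm_rpow_mul_le_of_weak_one (hφ : Measurable φ) (hφ0 : ∀ ξ, 0 ≤ φ ξ)
    (hM : ∀ t : ℝ, 0 < t → ENNReal.ofReal t * volume {ξ | t ≤ φ ξ} ≤ 1)
    (hû : IsFourierTransform u û) (hu : MemLp u (ENNReal.ofReal p)) (hp : 1 < p) (hp2 : p < 2) :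
    ∫⁻ ξ, ‖û ξ‖ₑ ^ p * ENNReal.ofReal (φ ξ) ^ (2 - p) ≤
      ENNReal.ofReal p *
          (4 * ENNReal.ofReal (1 / (p - 1)) + 4 * ENNReal.ofReal (1 / (2 - p))) *
        ∫⁻ x, ‖u x‖ₑ ^ p := by
  have hp0 : 0 < p := one_pos.trans hp
  set ν := volume.withDensity fun ξ ↦ ENNReal.ofReal (φ ξ ^ (2 : ℝ))
  have hφdens : Measurable fun ξ ↦ ENNReal.ofReal (φ ξ ^ (2 : ℝ)) := by fun_prop
  have hh : AEMeasurable (fun ξ ↦ ‖û ξ‖ / φ ξ) volume :=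
    hû.locallyIntegrable.aestronglyMeasurable.norm.aemeasurable.div hφ.aemeasurable
  calc
    _ = ∫⁻ ξ, ENNReal.ofReal ((‖û ξ‖ / φ ξ) ^ p) ∂ν := by
      rw [lintegral_withDensity_eq_lintegral_mul₀ hφdens.aemeasurable (by fun_prop)]
      refine lintegral_congr fun ξ ↦ ?_
      rw [Pi.mul_apply, ofReal_sq_mul_ofReal_div_rpow (norm_nonneg _) (hφ0 ξ) hp2,
        ofReal_norm_rpow _ hp0.le]
    _ ≤ _ := lintegral_rpow_le_of_meas_lt_le_truncated
      (hh.mono_ac (withDensity_absolutelyContinuous _ _))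
      (fun ξ ↦ div_nonneg (norm_nonneg _) (hφ0 ξ)) hu.1.norm.aemeasurable
      (fun x ↦ norm_nonneg _) hp0 hp hp2
      fun t ht ↦ withDensity_sq_lt_norm_div_le hφ hφ0 hM hû hu hp.le hp2.le ht
    _ = _ := by simp only [ofReal_norm_rpow _ hp0.le]

theorem ae_eq_zero_of_mul_meas_le_zero {α : Type*} [MeasurableSpace α] {μ : Measure α}
    {φ : α → ℝ} (hφ0 : ∀ ξ, 0 ≤ φ ξ)
    (hM : ∀ t : ℝ, 0 < t → ENNReal.ofReal t * μ {ξ | t ≤ φ ξ} ≤ 0) : φ =ᵐ[μ] 0 := by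
  have hle : ∀ᵐ ξ ∂μ, φ ξ ≤ 0 := by
    refine (ae_le_const_iff_forall_gt_measure_zero _ _).2 fun t ht ↦ ?_
    simpa [ht.not_ge] using hM t ht
  exact hle.mono fun ξ hξ ↦ hξ.antisymm (hφ0 ξ)

theorem lintegral_enorm_rpow_mul_le (hφ : Measurable φ) (hφ0 : ∀ ξ, 0 ≤ φ ξ) {M : ℝ≥0∞}
    (hMtop : M ≠ ⊤) (hM : ∀ t : ℝ, 0 < t → ENNReal.ofReal t * volume {ξ | t ≤ φ ξ} ≤ M)
    (hû : IsFourierTransform u û) (hu : MemLp u (ENNReal.ofReal p)) (hp : 1 < p) (hp2 : p < 2) :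
    ∫⁻ ξ, ‖û ξ‖ₑ ^ p * ENNReal.ofReal (φ ξ) ^ (2 - p) ≤
      ENNReal.ofReal p *
          (4 * ENNReal.ofReal (1 / (p - 1)) + 4 * ENNReal.ofReal (1 / (2 - p))) *
        M ^ (2 - p) * ∫⁻ x, ‖u x‖ₑ ^ p := by
  have h2p : 0 < 2 - p := sub_pos.2 hp2
  rcases eq_or_ne M 0 with rfl | hM0
  · have hzero : (fun ξ ↦ ‖û ξ‖ₑ ^ p * ENNReal.ofReal (φ ξ) ^ (2 - p)) =ᵐ[volume] 0 := by
      filter_upwards [ae_eq_zero_of_mul_meas_le_zero hφ0 hM] with ξ hξ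
      simp [hξ, h2p]
    simp [lintegral_congr_ae hzero]
  lift M to NNReal using hMtop
  have hMpos : 0 < (M : ℝ) := by simpa [pos_iff_ne_zero] using hM0
  have hweak (t : ℝ) (ht : 0 < t) : ENNReal.ofReal t * volume {ξ | t ≤ φ ξ / M} ≤ 1 := by
    have htM := hM (t * M) (by positivity)
    rw [ENNReal.ofReal_mul ht.le, ENNReal.ofReal_coe_nnreal, mul_right_comm] at htM
    simpa only [le_div_iff₀ hMpos, ENNReal.div_self hM0 ENNReal.coe_ne_top] using
      ENNReal.le_div_iff_mul_le (.inl hM0) (.inl ENNReal.coe_ne_top) |>.2 htM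
  calc
    _ = ∫⁻ ξ, (M : ℝ≥0∞) ^ (2 - p) * (‖û ξ‖ₑ ^ p * ENNReal.ofReal (φ ξ / M) ^ (2 - p)) := by
      refine lintegral_congr fun ξ ↦ ?_
      rw [mul_left_comm, ← ENNReal.mul_rpow_of_nonneg _ _ h2p.le, ← ENNReal.ofReal_coe_nnreal,
        ← ENNReal.ofReal_mul hMpos.le, mul_div_cancel₀ _ hMpos.ne']
    _ = (M : ℝ≥0∞) ^ (2 - p) * ∫⁻ ξ, ‖û ξ‖ₑ ^ p * ENNReal.ofReal (φ ξ / M) ^ (2 - p) :=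
      lintegral_const_mul' _ _ (by simp [hp2.le])
    _ ≤ _ := by
      rw [mul_comm (_ * _) (_ ^ _), mul_assoc]
      gcongr
      exact lintegral_enorm_rpow_mul_le_of_weak_one (hφ.div_const _)
        (fun ξ ↦ div_nonneg (hφ0 ξ) hMpos.le) hweak hû hu hp hp2

variable (V E)

theorem exists_lintegral_enorm_rpow_mul_le (hp : 1 < p) (hp2 : p ≤ 2) :
    ∃ C : ℝ≥0∞, 0 < C ∧ C ≠ ⊤ ∧
      ∀ φ : V → ℝ, Measurable φ → (∀ ξ, 0 ≤ φ ξ) → ∀ M : ℝ≥0∞, M ≠ ⊤ →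
        (∀ t : ℝ, 0 < t → ENNReal.ofReal t * volume {ξ | t ≤ φ ξ} ≤ M) →
        ∀ u û : V → E, MemLp u (ENNReal.ofReal p) → IsFourierTransform u û →
          ∫⁻ ξ, ‖û ξ‖ₑ ^ p * ENNReal.ofReal (φ ξ) ^ (2 - p) ≤
            C * M ^ (2 - p) * ∫⁻ x, ‖u x‖ₑ ^ p := by
  rcases hp2.eq_or_lt with rfl | hp2
  · refine ⟨1, one_pos, ENNReal.one_ne_top, fun φ _ _ M _ _ u û hu hû ↦ ?_⟩
    simpa using (hû.lintegral_enorm_rpow_two (by simpa using hu)).le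
  · refine ⟨_, ?_, ?_, fun φ hφ hφ0 M hMtop hM u û hu hû ↦
      lintegral_enorm_rpow_mul_le hφ hφ0 hMtop hM hû hu hp hp2⟩
    · have : 0 < p - 1 := sub_pos.2 hp
      simp [one_pos.trans hp, this]
    · finiteness

theorem stmt_8_general (hp : 1 < p) (hp2 : p ≤ 2) :
    ∃ K : ℝ≥0∞, 0 < K ∧ K ≠ ⊤ ∧
      ∀ φ : V → ℝ, Measurable φ → (∀ ξ, 0 ≤ φ ξ) → ∀ M : ℝ≥0∞, M ≠ ⊤ →
        (∀ t : ℝ, 0 < t → ENNReal.ofReal t * volume {ξ | t ≤ φ ξ} ≤ M) →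
        ∀ u : V → E, MemLp u (ENNReal.ofReal p) → (∃ û, IsFourierTransform u û) ∧
          ∀ û, IsFourierTransform u û →
            (∫⁻ ξ, ‖û ξ‖ₑ ^ p * ENNReal.ofReal (φ ξ) ^ (2 - p)) ^ (1 / p) ≤
              K * M ^ ((2 - p) / p) * eLpNorm u (ENNReal.ofReal p) volume := by
  have hp0 : 0 < p := one_pos.trans hp
  have hp' : 0 ≤ 1 / p := by positivity
  obtain ⟨C, hC0, hCtop, hC⟩ := exists_lintegral_enorm_rpow_mul_le V E hp hp2
  refine ⟨C ^ (1 / p), ENNReal.rpow_pos hC0 hCtop, ENNReal.rpow_ne_top_of_nonneg hp' hCtop,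
    fun φ hφ hφ0 M hMtop hM u hu ↦ ⟨?_, fun û hû ↦ ?_⟩⟩
  · obtain ⟨w, -, hsum⟩ := exists_isFourierTransform_truncation hu hp.le hp2 one_pos
    exact ⟨_, hsum⟩
  calc
    _ ≤ (C * M ^ (2 - p) * ∫⁻ x, ‖u x‖ₑ ^ p) ^ (1 / p) :=
      ENNReal.rpow_le_rpow (hC φ hφ hφ0 M hMtop hM u û hu hû) hp'
    _ = C ^ (1 / p) * M ^ ((2 - p) / p) * (∫⁻ x, ‖u x‖ₑ ^ p) ^ (1 / p) := by
      rw [ENNReal.mul_rpow_of_nonneg _ _ hp', ENNReal.mul_rpow_of_nonneg _ _ hp',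
        ← ENNReal.rpow_mul, mul_one_div]
    _ = _ := by
      rw [eLpNorm_eq_lintegral_rpow_enorm_toReal (by simpa using hp0) ENNReal.ofReal_ne_top,
        ENNReal.toReal_ofReal hp0.le]

end Paley

/-- Paley's inequality on `ℝⁿ`: for `1 < p ≤ 2` there is a constant `K` (depending only
on `p` and `n`) such that for every measurable `φ ≥ 0` with
`M_φ = sup_{t>0} t |{ξ : φ ξ ≥ t}| < ∞` and every `u`,
`(∫ |û(ξ)|^p φ(ξ)^{2-p} dξ)^{1/p} ≤ K · M_φ^{(2-p)/p} ‖u‖_{L^p}`. -/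
theorem stmt_8 (n : ℕ) (p : ℝ) (hp : 1 < p) (hp2 : p ≤ 2) :
    ∃ K : ℝ≥0∞, 0 < K ∧ K ≠ ⊤ ∧
      ∀ φ : EuclideanSpace ℝ (Fin n) → ℝ, Measurable φ → (∀ ξ, 0 ≤ φ ξ) →
        ∀ Mφ : ℝ≥0∞, Mφ ≠ ⊤ →
          (∀ t : ℝ, 0 < t →
            ENNReal.ofReal t * volume {ξ : EuclideanSpace ℝ (Fin n) | t ≤ φ ξ} ≤ Mφ) →
          ∀ u : 𝓢(EuclideanSpace ℝ (Fin n), ℂ),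
            (∫⁻ ξ, (‖𝓕 (⇑u) ξ‖₊ : ℝ≥0∞) ^ p * ENNReal.ofReal (φ ξ) ^ (2 - p)) ^ (1/p) ≤
              K * Mφ ^ ((2 - p)/p) * eLpNorm (⇑u) (ENNReal.ofReal p) volume := by
  obtain ⟨K, hK0, hKtop, hK⟩ := stmt_8_general (EuclideanSpace ℝ (Fin n)) ℂ hp hp2
  exact ⟨K, hK0, hKtop, fun φ hφ hφ0 Mφ hMtop hM u ↦
    (hK φ hφ hφ0 Mφ hMtop hM u (u.memLp _)).2 _ (.of_integrable u.integrable)⟩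
end
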